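/- There is a constant C depending only on m and K such that for every ε' ∈ (0,1), with probability at least 1 − ε' (over the Gaussian noise ε), the inequality (ε/σ, f)_n ≤ C [ ( r_n + √(log(ep)/n) + √(log(1/ε')/n) ) ‖f‖_n + ( r_n² + r_n √(log(ep)/n) + r_n √(log(1/ε')/n) ) Ω̃_gr(f) ] holds simultaneously for all f ∈ F_M. -/

import Mathlib

open MeasureTheory ProbabilityTheory

noncomputable section

namespace Census

/-- Additive representation indexed by `{(j,k) : j ≤ k}`: `main j` is the (univariate)
diagonal component for `(j,j)`, `inter j k` the bivariate component for `j < k`;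
all components are `m`-times continuously differentiable. -/
structure AddRepM (p m : ℕ) where
  main : Fin p → ℝ → ℝ
  inter : Fin p → Fin p → ℝ → ℝ → ℝ
  smooth_main : ∀ j, ContDiff ℝ (m : ℕ∞) (main j)
  smooth_inter : ∀ j k, ContDiff ℝ (m : ℕ∞) (fun q : ℝ × ℝ => inter j k q.1 q.2)

namespace AddRepM
variable {p m : ℕ}

def toFun (R : AddRepM p m) (x : Fin p → ℝ) : ℝ :=
  (∑ j, R.main j (x j)) + ∑ j, ∑ k, if j < k then R.inter j k (x j) (x k) else 0

def Gcount (R : AddRepM p m) : ℕ :=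
  Nat.card {j : Fin p // R.main j ≠ 0} +
    Nat.card {q : Fin p × Fin p // q.1 < q.2 ∧ R.inter q.1 q.2 ≠ 0}

end AddRepM

/-- Mixed partial derivative `∂^{a+b} g / ∂u^a ∂v^b`. -/
def pd (a b : ℕ) (g : ℝ → ℝ → ℝ) (u v : ℝ) : ℝ :=
  iteratedDeriv a (fun t => iteratedDeriv b (g t) v) u

/-- `m`-th order smoothness penalty of a univariate component. -/
def Omega1M (m : ℕ) (h : ℝ → ℝ) : ℝ := ∫ u in (0:ℝ)..1, (iteratedDeriv m h u) ^ 2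

/-- `m`-th order smoothness penalty of a bivariate component:
`Σ_{a+b=m} ‖∂^m g/∂u^a ∂v^b‖²_{L²([0,1]²)}`. -/
def Omega2M (m : ℕ) (g : ℝ → ℝ → ℝ) : ℝ :=
  ∑ a ∈ Finset.range (m + 1),
    ∫ q in (Set.Icc (0:ℝ) 1) ×ˢ (Set.Icc (0:ℝ) 1), (pd a (m - a) g q.1 q.2) ^ 2

def OmegaGrM {p m : ℕ} (R : AddRepM p m) : ℝ :=
  (∑ j, Omega1M m (R.main j)) + ∑ j, ∑ k, if j < k then Omega2M m (R.inter j k) else 0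

def OmegaTildeGrM {p m : ℕ} (R : AddRepM p m) : ℝ :=
  (∑ j, Real.sqrt (Omega1M m (R.main j))) +
    ∑ j, ∑ k, if j < k then Real.sqrt (Omega2M m (R.inter j k)) else 0

def evalVecM {n p m : ℕ} (x : Fin n → Fin p → ℝ) (R : AddRepM p m) : Fin n → ℝ :=
  fun i => R.toFun (x i)

def normSqN {n : ℕ} (v : Fin n → ℝ) : ℝ := (1 / n) * ∑ i, v i ^ 2

def normN {n : ℕ} (v : Fin n → ℝ) : ℝ := Real.sqrt (normSqN v)

def innerN {n : ℕ} (u v : Fin n → ℝ) : ℝ := (1 / n) * ∑ i, u i * v i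

def objectiveM {n p m : ℕ} (x : Fin n → Fin p → ℝ) (y : Fin n → ℝ) (lam mu : ℝ)
    (R : AddRepM p m) : ℝ :=
  normSqN (fun i => y i - evalVecM x R i) + lam * OmegaGrM R + mu * (R.Gcount : ℝ)

def IsMinimizerM {n p m : ℕ} (K : ℕ) (x : Fin n → Fin p → ℝ) (y : Fin n → ℝ)
    (lam mu : ℝ) (Rhat : AddRepM p m) : Prop :=
  Rhat.Gcount ≤ K ∧ ∀ R : AddRepM p m, R.Gcount ≤ K →
    objectiveM x y lam mu Rhat ≤ objectiveM x y lam mu R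

/-- Critical rate `rₙ = n^{-m/(2m+2)}`. -/
def rnM (m n : ℕ) : ℝ := (n : ℝ) ^ (-(m : ℝ) / (2 * m + 2))

def logep (p : ℕ) : ℝ := Real.log (Real.exp 1 * p)

def gaussMeasure (n : ℕ) (σ : ℝ) : Measure (Fin n → ℝ) :=
  Measure.pi fun _ : Fin n => gaussianReal 0 ⟨σ ^ 2, sq_nonneg σ⟩

/-- Membership of a representation's support in the index set `J ⊆ 𝒥`. -/
def SuppIn {p m : ℕ} (R : AddRepM p m) (J : Finset (Fin p × Fin p)) : Prop :=
  (∀ j, R.main j ≠ 0 → (j, j) ∈ J) ∧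
    (∀ j k, R.inter j k ≠ (0 : ℝ → ℝ → ℝ) → j < k ∧ (j, k) ∈ J)

end Census

namespace Census

lemma gaussMeasure_eq (n : ℕ) (σ : ℝ) : gaussMeasure n σ =
    Measure.pi fun _ : Fin n => gaussianReal 0 (NNReal.mk (σ ^ 2) (sq_nonneg σ)) := rfl

lemma lint_exp_lin (n : ℕ) (v : NNReal) (c : Fin n → ℝ) :
    ∫⁻ ξ, ENNReal.ofReal (Real.exp (∑ i, c i * ξ i))
      ∂(Measure.pi fun _ : Fin n => gaussianReal 0 v) =
    ENNReal.ofReal (Real.exp (v * (∑ i, c i ^ 2) / 2)) := by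
  have h1 : ∀ t : ℝ, ∫⁻ x, ENNReal.ofReal (Real.exp (t * x)) ∂(gaussianReal 0 v) =
      ENNReal.ofReal (Real.exp (v * t ^ 2 / 2)) := by
    intro t
    rw [← ofReal_integral_eq_lintegral_ofReal (integrable_exp_mul_gaussianReal t)
      (Filter.Eventually.of_forall fun x => (Real.exp_pos _).le)]
    have := mgf_gaussianReal (p := gaussianReal 0 v) (X := id) (μ := 0) (v := v) (by simp) t
    rw [mgf] at this
    simp only [id] at this
    rw [this]; simp
  have h2 := lintegral_prod_eq_prod_lintegral_of_indepFun (Finset.univ : Finset (Fin n))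
    (fun i (ξ : Fin n → ℝ) => ENNReal.ofReal (Real.exp (c i * ξ i)))
    (iIndepFun_pi (μ := fun _ : Fin n => gaussianReal 0 v)
      (X := fun i x => ENNReal.ofReal (Real.exp (c i * x))) (fun i => by fun_prop))
    (fun i => by fun_prop)
  have h3 : ∀ i : Fin n, ∫⁻ ξ, ENNReal.ofReal (Real.exp (c i * ξ i))
      ∂(Measure.pi fun _ : Fin n => gaussianReal 0 v) =
      ENNReal.ofReal (Real.exp (v * c i ^ 2 / 2)) := by
    intro i
    rw [← h1 (c i)]
    exact (measurePreserving_eval (fun _ : Fin n => gaussianReal 0 v) i).lintegral_comp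
      (f := fun x => ENNReal.ofReal (Real.exp (c i * x))) (by fun_prop)
  simp_rw [h3] at h2
  simp_rw [Real.exp_sum]
  simp_rw [ENNReal.ofReal_prod_of_nonneg (fun i _ => (Real.exp_pos _).le)]
  rw [h2, ← ENNReal.ofReal_prod_of_nonneg (fun i _ => (Real.exp_pos _).le), ← Real.exp_sum]
  congr 2
  rw [Finset.mul_sum, Finset.sum_div]

lemma lint_exp_sq1 : ∫⁻ x, ENNReal.ofReal (Real.exp (x ^ 2 / 4)) ∂(gaussianReal 0 1) ≤
    ENNReal.ofReal (Real.exp 1) := by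
  have hfun : (fun x : ℝ => gaussianPDFReal 0 1 x * Real.exp (x ^ 2 / 4)) =
      fun x => (√(2 * Real.pi))⁻¹ * Real.exp (-(1/4) * x ^ 2) := by
    funext x
    rw [gaussianPDFReal, mul_assoc, ← Real.exp_add]
    simp only [NNReal.coe_one, mul_one, sub_zero]
    congr 2; ring
  rw [gaussianReal_of_var_ne_zero 0 one_ne_zero,
    lintegral_withDensity_eq_lintegral_mul _ (measurable_gaussianPDF _ _) (by fun_prop)]
  simp only [Pi.mul_apply, gaussianPDF]
  simp_rw [← ENNReal.ofReal_mul (gaussianPDFReal_nonneg 0 1 _)]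
  simp_rw [fun x => congrFun hfun x]
  rw [← ofReal_integral_eq_lintegral_ofReal
    ((integrable_exp_neg_mul_sq (by norm_num)).const_mul _)
    (Filter.Eventually.of_forall fun x => by positivity)]
  apply ENNReal.ofReal_le_ofReal
  rw [integral_const_mul, integral_gaussian]
  have h4 : √(Real.pi / (1/4)) ≤ 2 * √(2 * Real.pi) := by
    rw [Real.sqrt_le_left (by positivity), mul_pow, Real.sq_sqrt (by positivity)]
    nlinarith [Real.pi_pos]
  have h5 : 0 < √(2 * Real.pi) := by positivity
  calc (√(2 * Real.pi))⁻¹ * √(Real.pi / (1/4)) ≤ (√(2 * Real.pi))⁻¹ * (2 * √(2 * Real.pi)) := by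
        gcongr
    _ = 2 := by field_simp
    _ ≤ Real.exp 1 := by linarith [Real.add_one_le_exp 1]

lemma lint_exp_sq (d : ℕ) :
    ∫⁻ g, ENNReal.ofReal (Real.exp ((∑ i, g i ^ 2) / 4))
      ∂(Measure.pi fun _ : Fin d => gaussianReal 0 1) ≤ ENNReal.ofReal (Real.exp d) := by
  have h2 := lintegral_prod_eq_prod_lintegral_of_indepFun (Finset.univ : Finset (Fin d))
    (fun i (ξ : Fin d → ℝ) => ENNReal.ofReal (Real.exp (ξ i ^ 2 / 4)))
    (iIndepFun_pi (μ := fun _ : Fin d => gaussianReal 0 1)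
      (X := fun i x => ENNReal.ofReal (Real.exp (x ^ 2 / 4))) (fun i => by fun_prop))
    (fun i => by fun_prop)
  have h3 : ∀ i : Fin d, ∫⁻ ξ, ENNReal.ofReal (Real.exp (ξ i ^ 2 / 4))
      ∂(Measure.pi fun _ : Fin d => gaussianReal 0 1) ≤ ENNReal.ofReal (Real.exp 1) := by
    intro i
    refine le_trans (le_of_eq ?_) lint_exp_sq1
    exact (measurePreserving_eval (fun _ : Fin d => gaussianReal 0 1) i).lintegral_comp
      (f := fun x => ENNReal.ofReal (Real.exp (x ^ 2 / 4))) (by fun_prop)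
  simp_rw [Finset.sum_div, Real.exp_sum]
  simp_rw [ENNReal.ofReal_prod_of_nonneg (fun i _ => (Real.exp_pos _).le)]
  rw [h2]
  refine (Finset.prod_le_prod' fun i _ => h3 i).trans ?_
  rw [Finset.prod_const, Finset.card_univ, Fintype.card_fin, ← ENNReal.ofReal_pow (by positivity),
    ← Real.exp_nat_mul, mul_one]

lemma lint_chi (n d : ℕ) (σ : ℝ) (hσ : 0 < σ) (A : Fin d → Fin n → ℝ)
    (hA : ∀ k l, ∑ i, A k i * A l i = if k = l then 1 else 0) :
    ∫⁻ ξ, ENNReal.ofReal (Real.exp ((∑ k, (∑ i, A k i * (ξ i / σ)) ^ 2) / 4))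
      ∂(gaussMeasure n σ) ≤ ENNReal.ofReal (Real.exp d) := by
  refine le_trans (le_of_eq ?_) (lint_exp_sq d)
  have hs2 : (√2)⁻¹ ^ 2 = (1:ℝ) / 2 := by
    rw [inv_pow, Real.sq_sqrt (by norm_num)]; norm_num
  have e1 : ∀ ξ : Fin n → ℝ,
      ENNReal.ofReal (Real.exp ((∑ k, (∑ i, A k i * (ξ i / σ)) ^ 2) / 4)) =
      ∫⁻ g, ENNReal.ofReal (Real.exp (∑ k, ((√2)⁻¹ * ∑ i, A k i * (ξ i / σ)) * g k))
        ∂(Measure.pi fun _ : Fin d => gaussianReal 0 1) := by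
    intro ξ
    rw [lint_exp_lin]
    congr 2
    simp_rw [mul_pow, hs2]
    rw [← Finset.mul_sum]; simp; ring
  have e2 : ∀ g : Fin d → ℝ, ENNReal.ofReal (Real.exp ((∑ k, g k ^ 2) / 4)) =
      ∫⁻ ξ, ENNReal.ofReal (Real.exp (∑ k, ((√2)⁻¹ * ∑ i, A k i * (ξ i / σ)) * g k))
        ∂(gaussMeasure n σ) := by
    intro g
    have : ∀ ξ : Fin n → ℝ, ∑ k, ((√2)⁻¹ * ∑ i, A k i * (ξ i / σ)) * g k =
        ∑ i, ((√2)⁻¹ * σ⁻¹ * ∑ k, A k i * g k) * ξ i := by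
      intro ξ
      simp_rw [Finset.mul_sum, Finset.sum_mul]
      rw [Finset.sum_comm]
      refine Finset.sum_congr rfl fun i _ => Finset.sum_congr rfl fun k _ => ?_
      ring
    simp_rw [this]
    rw [gaussMeasure_eq, lint_exp_lin]
    congr 2
    simp_rw [mul_pow, hs2]
    have h5 : ∑ i, (∑ k, A k i * g k) ^ 2 = ∑ k, g k ^ 2 := by
      have : ∀ i, (∑ k, A k i * g k) ^ 2 = ∑ k, ∑ l, (g k * g l) * (A k i * A l i) := by
        intro i
        rw [sq, Finset.sum_mul_sum]
        refine Finset.sum_congr rfl fun k _ => Finset.sum_congr rfl fun l _ => ?_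
        ring
      simp_rw [this]
      rw [Finset.sum_comm]
      refine Finset.sum_congr rfl fun k _ => ?_
      rw [Finset.sum_comm]
      simp_rw [← Finset.mul_sum, hA]
      simp [sq]
    rw [← Finset.mul_sum, h5]
    simp only [NNReal.coe_mk]
    field_simp; ring
  simp_rw [e1, e2]
  have : IsProbabilityMeasure (gaussMeasure n σ) := by rw [gaussMeasure_eq]; infer_instance
  rw [lintegral_lintegral_swap]
  apply Measurable.aemeasurable
  unfold Function.uncurry
  fun_prop

lemma exists_onb (n : ℕ) (W : Submodule ℝ (Fin n → ℝ)) :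
    ∃ A : Fin (Module.finrank ℝ W) → Fin n → ℝ,
      (∀ k l, ∑ i, A k i * A l i = if k = l then 1 else 0) ∧
      (∀ w ∈ W, ∀ i, w i = ∑ k, (∑ j, A k j * w j) * A k i) := by
  let e := (WithLp.linearEquiv 2 ℝ (Fin n → ℝ))
  let W' : Submodule ℝ (EuclideanSpace ℝ (Fin n)) := W.map e.symm.toLinearMap
  have hfr : Module.finrank ℝ W' = Module.finrank ℝ W :=
    LinearEquiv.finrank_map_eq e.symm W
  let b := (stdOrthonormalBasis ℝ W').reindex (finCongr hfr)
  have hin : ∀ x y : EuclideanSpace ℝ (Fin n), inner ℝ x y = ∑ i, x i * y i := by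
    intro x y
    simp [PiLp.inner_apply, mul_comm]
  refine ⟨fun k i => (b k : EuclideanSpace ℝ (Fin n)) i, ?_, ?_⟩
  · intro k l
    rw [← hin, ← Submodule.coe_inner]
    exact orthonormal_iff_ite.mp b.orthonormal k l
  · intro w hw i
    have hw' : e.symm w ∈ W' := Submodule.mem_map_of_mem hw
    have := b.sum_repr' ⟨e.symm w, hw'⟩
    have h2 := congrArg (fun z : W' => (z : EuclideanSpace ℝ (Fin n)) i) this
    simp only [Submodule.coe_sum, Submodule.coe_smul, Submodule.coe_inner, hin] at h2
    have h3 : ((e.symm w : EuclideanSpace ℝ (Fin n))) i = w i := rfl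
    rw [h3] at h2
    rw [← h2]
    simp [e]

lemma gauss_subspace (n d : ℕ) (σ : ℝ) (hσ : 0 < σ) (W : Submodule ℝ (Fin n → ℝ))
    (hd : Module.finrank ℝ W ≤ d) (t : ℝ) :
    gaussMeasure n σ {ξ | ¬ ∀ w ∈ W, ∑ i, (ξ i / σ) * w i ≤ √(4 * (t + d)) * √(∑ i, w i ^ 2)}
      ≤ ENNReal.ofReal (Real.exp (-t)) := by
  obtain ⟨A, hA, hW⟩ := exists_onb n W
  set X : (Fin n → ℝ) → ENNReal := fun ξ =>
    ENNReal.ofReal (Real.exp ((∑ k, (∑ i, A k i * (ξ i / σ)) ^ 2) / 4)) with hX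
  have hXm : Measurable X := by rw [hX]; fun_prop
  have hsub : {ξ : Fin n → ℝ | ¬ ∀ w ∈ W, ∑ i, (ξ i / σ) * w i ≤
      √(4 * (t + d)) * √(∑ i, w i ^ 2)} ⊆ {ξ | ENNReal.ofReal (Real.exp (t + d)) ≤ X ξ} := by
    intro ξ hξ
    by_contra hcon
    apply hξ
    intro w hw
    simp only [Set.mem_ofPred_eq, not_le, hX] at hcon
    have hlt : (∑ k, (∑ i, A k i * (ξ i / σ)) ^ 2) / 4 < t + d := by
      have := (ENNReal.ofReal_lt_ofReal_iff (Real.exp_pos _)).mp hcon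
      exact Real.exp_lt_exp.mp this
    have e1 : ∑ i, (ξ i / σ) * w i = ∑ k, (∑ i, A k i * (ξ i / σ)) * (∑ j, A k j * w j) := by
      calc ∑ i, (ξ i / σ) * w i = ∑ i, (ξ i / σ) * ∑ k, (∑ j, A k j * w j) * A k i := by
            refine Finset.sum_congr rfl fun i _ => ?_
            rw [← hW w hw i]
        _ = _ := by
            simp_rw [Finset.mul_sum (s := (Finset.univ : Finset (Fin (Module.finrank ℝ W))))]
            rw [Finset.sum_comm]
            refine Finset.sum_congr rfl fun k _ => ?_
            rw [Finset.sum_mul]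
            refine Finset.sum_congr rfl fun i _ => ?_
            ring
    have e2 : ∑ i, w i ^ 2 = ∑ k, (∑ j, A k j * w j) ^ 2 := by
      calc ∑ i, w i ^ 2 = ∑ i, w i * ∑ k, (∑ j, A k j * w j) * A k i := by
            refine Finset.sum_congr rfl fun i _ => ?_
            rw [← hW w hw i, sq]
        _ = _ := by
            simp_rw [Finset.mul_sum (s := (Finset.univ : Finset (Fin (Module.finrank ℝ W))))]
            rw [Finset.sum_comm]
            refine Finset.sum_congr rfl fun k _ => ?_
            rw [sq, Finset.sum_mul]
            refine Finset.sum_congr rfl fun i _ => ?_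
            ring
    rw [e1, e2]
    refine (Real.sum_mul_le_sqrt_mul_sqrt _ _ _).trans ?_
    gcongr
    linarith
  refine (measure_mono hsub).trans ?_
  refine (meas_ge_le_lintegral_div hXm.aemeasurable (by simp [Real.exp_pos]) (by simp)).trans ?_
  have h1 := lint_chi n _ σ hσ A hA
  refine (ENNReal.div_le_div_right h1 _).trans ?_
  rw [← ENNReal.ofReal_div_of_pos (Real.exp_pos _), ← Real.exp_sub]
  apply ENNReal.ofReal_le_ofReal
  apply Real.exp_le_exp.mpr
  have : ((Module.finrank ℝ W : ℕ) : ℝ) ≤ d := by exact_mod_cast hd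
  linarith

end Census

namespace Census

/-- partial derivative in the first variable -/
def D1 (F : ℝ × ℝ → ℝ) : ℝ × ℝ → ℝ := fun z => fderiv ℝ F z (1, 0)

/-- partial derivative in the second variable -/
def D2 (F : ℝ × ℝ → ℝ) : ℝ × ℝ → ℝ := fun z => fderiv ℝ F z (0, 1)

/-- mixed partial derivatives -/
def DD (a b : ℕ) (F : ℝ × ℝ → ℝ) : ℝ × ℝ → ℝ := D1^[a] (D2^[b] F)

lemma D1_contDiff {F : ℝ × ℝ → ℝ} {k : ℕ} (h : ContDiff ℝ ((k + 1 : ℕ) : ℕ∞) F) :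
    ContDiff ℝ (k : ℕ∞) (D1 F) := by
  have : ContDiff ℝ (k : ℕ∞) (fderiv ℝ F) := h.fderiv_right (by norm_cast)
  exact this.clm_apply contDiff_const

lemma D2_contDiff {F : ℝ × ℝ → ℝ} {k : ℕ} (h : ContDiff ℝ ((k + 1 : ℕ) : ℕ∞) F) :
    ContDiff ℝ (k : ℕ∞) (D2 F) := by
  have : ContDiff ℝ (k : ℕ∞) (fderiv ℝ F) := h.fderiv_right (by norm_cast)
  exact this.clm_apply contDiff_const

lemma D1_comm {F : ℝ × ℝ → ℝ} (h : ContDiff ℝ ((2 : ℕ) : ℕ∞) F) : D2 (D1 F) = D1 (D2 F) := by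
  funext z
  have hd : ContDiff ℝ ((1 : ℕ) : ℕ∞) (fderiv ℝ F) := h.fderiv_right (by norm_cast)
  have hdd : DifferentiableAt ℝ (fderiv ℝ F) z := hd.contDiffAt.differentiableAt (by simp)
  have hs : IsSymmSndFDerivAt ℝ F z := h.contDiffAt.isSymmSndFDerivAt (by simp)
  have e : ∀ v w : ℝ × ℝ, fderiv ℝ (fun z => fderiv ℝ F z v) z w = fderiv ℝ (fderiv ℝ F) z w v := by
    intro v w
    rw [fderiv_clm_apply hdd (by fun_prop)]
    simp
  show fderiv ℝ (fun z => fderiv ℝ F z (1, 0)) z (0, 1) =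
    fderiv ℝ (fun z => fderiv ℝ F z (0, 1)) z (1, 0)
  rw [e, e]
  exact hs _ _

lemma D2it_contDiff {F : ℝ × ℝ → ℝ} (b k : ℕ) (h : ContDiff ℝ ((b + k : ℕ) : ℕ∞) F) :
    ContDiff ℝ (k : ℕ∞) (D2^[b] F) := by
  induction b generalizing k with
  | zero => simpa using h
  | succ b ih =>
    rw [Function.iterate_succ_apply']
    apply D2_contDiff
    apply ih
    convert h using 3; omega

lemma D1it_contDiff {F : ℝ × ℝ → ℝ} (b k : ℕ) (h : ContDiff ℝ ((b + k : ℕ) : ℕ∞) F) :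
    ContDiff ℝ (k : ℕ∞) (D1^[b] F) := by
  induction b generalizing k with
  | zero => simpa using h
  | succ b ih =>
    rw [Function.iterate_succ_apply']
    apply D1_contDiff
    apply ih
    convert h using 3; omega

lemma DD_contDiff {F : ℝ × ℝ → ℝ} (a b k : ℕ) (h : ContDiff ℝ ((a + b + k : ℕ) : ℕ∞) F) :
    ContDiff ℝ (k : ℕ∞) (DD a b F) := by
  apply D1it_contDiff
  apply D2it_contDiff
  convert h using 3; omega

lemma D1_DD (a b : ℕ) (F : ℝ × ℝ → ℝ) : D1 (DD a b F) = DD (a + 1) b F := by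
  rw [DD, DD, Function.iterate_succ_apply']

lemma D2_DD (a b : ℕ) (F : ℝ × ℝ → ℝ) (h : ContDiff ℝ ((a + b + 1 : ℕ) : ℕ∞) F) :
    D2 (DD a b F) = DD a (b + 1) F := by
  induction a with
  | zero => simp [DD, Function.iterate_succ_apply']
  | succ a ih =>
    rw [← D1_DD, D1_comm, ih, D1_DD]
    · apply h.of_le; norm_cast; omega
    · apply DD_contDiff
      convert h using 3; omega

lemma hasDerivAt_line {F : ℝ × ℝ → ℝ} (h : ContDiff ℝ ((1 : ℕ) : ℕ∞) F) (y w : ℝ × ℝ) (t : ℝ) :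
    HasDerivAt (fun t : ℝ => F (y + t • w)) (w.1 * D1 F (y + t • w) + w.2 * D2 F (y + t • w)) t := by
  have hF : HasFDerivAt F (fderiv ℝ F (y + t • w)) (y + t • w) :=
    (h.contDiffAt.differentiableAt (by simp)).hasFDerivAt
  have hl : HasDerivAt (fun t : ℝ => y + t • w) w t := by
    simpa using ((hasDerivAt_id t).smul_const w).const_add y
  refine (hF.comp_hasDerivAt t hl).congr_deriv ?_
  have hw : w = w.1 • ((1 : ℝ), (0 : ℝ)) + w.2 • ((0 : ℝ), (1 : ℝ)) := by ext <;> simp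
  have e : ∀ L : ℝ × ℝ →L[ℝ] ℝ, L w = w.1 * L (1, 0) + w.2 * L (0, 1) := by
    intro L
    conv_lhs => rw [hw]
    rw [map_add, map_smul, map_smul]
    simp
  rw [e]
  rfl

lemma deriv_D1 {F : ℝ × ℝ → ℝ} (h : ContDiff ℝ ((1 : ℕ) : ℕ∞) F) (u v : ℝ) :
    deriv (fun t => F (t, v)) u = D1 F (u, v) := by
  have := hasDerivAt_line h (0, v) (1, 0) u
  simpa using this.deriv

lemma deriv_D2 {F : ℝ × ℝ → ℝ} (h : ContDiff ℝ ((1 : ℕ) : ℕ∞) F) (u v : ℝ) :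
    deriv (fun t => F (u, t)) v = D2 F (u, v) := by
  have := hasDerivAt_line h (u, 0) (0, 1) v
  simpa using this.deriv

lemma iter_D2 {F : ℝ × ℝ → ℝ} (b : ℕ) (h : ContDiff ℝ (b : ℕ∞) F) (u : ℝ) :
    iteratedDeriv b (fun t => F (u, t)) = fun v => (D2^[b] F) (u, v) := by
  induction b with
  | zero => simp
  | succ b ih =>
    rw [iteratedDeriv_succ, ih (h.of_le (by norm_cast; omega))]
    funext v
    rw [deriv_D2 (D2it_contDiff b 1 h), Function.iterate_succ_apply']

lemma iter_D1 {F : ℝ × ℝ → ℝ} (b : ℕ) (h : ContDiff ℝ (b : ℕ∞) F) (v : ℝ) :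
    iteratedDeriv b (fun t => F (t, v)) = fun u => (D1^[b] F) (u, v) := by
  induction b with
  | zero => simp
  | succ b ih =>
    rw [iteratedDeriv_succ, ih (h.of_le (by norm_cast; omega))]
    funext u
    rw [deriv_D1 (D1it_contDiff b 1 h), Function.iterate_succ_apply']

lemma pd_eq_DD (a b : ℕ) (g : ℝ → ℝ → ℝ)
    (h : ContDiff ℝ ((a + b : ℕ) : ℕ∞) (fun q : ℝ × ℝ => g q.1 q.2)) (u v : ℝ) :
    pd a b g u v = DD a b (fun q : ℝ × ℝ => g q.1 q.2) (u, v) := by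
  unfold pd DD
  have h1 : ∀ t, iteratedDeriv b (g t) v = (D2^[b] (fun q : ℝ × ℝ => g q.1 q.2)) (t, v) := by
    intro t
    exact congrFun (iter_D2 (F := fun q : ℝ × ℝ => g q.1 q.2) b
      (h.of_le (by norm_cast; omega)) t) v
  simp_rw [h1]
  rw [iter_D1 a (D2it_contDiff b a (by convert h using 3; omega))]

/-- `k`-th derivative along a line -/
def lineD (F : ℝ × ℝ → ℝ) (y w : ℝ × ℝ) (k : ℕ) (t : ℝ) : ℝ :=
  ∑ ij ∈ Finset.HasAntidiagonal.antidiagonal k, (k.choose ij.1 : ℝ) *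
    (w.1 ^ ij.1 * w.2 ^ ij.2 * DD ij.1 ij.2 F (y + t • w))

lemma lineD_hasDerivAt {F : ℝ × ℝ → ℝ} (y w : ℝ × ℝ) (k : ℕ)
    (h : ContDiff ℝ ((k + 1 : ℕ) : ℕ∞) F) (t : ℝ) :
    HasDerivAt (lineD F y w k) (lineD F y w (k + 1) t) t := by
  have e : lineD F y w (k + 1) t = ∑ ij ∈ Finset.HasAntidiagonal.antidiagonal k, (k.choose ij.1 : ℝ) *
      (w.1 ^ ij.1 * w.2 ^ ij.2 * (w.1 * D1 (DD ij.1 ij.2 F) (y + t • w) +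
        w.2 * D2 (DD ij.1 ij.2 F) (y + t • w))) := by
    unfold lineD
    rw [Finset.sum_antidiagonal_choose_succ_mul
      (fun a b => w.1 ^ a * w.2 ^ b * DD a b F (y + t • w)), ← Finset.sum_add_distrib]
    refine Finset.sum_congr rfl fun ij hij => ?_
    have hk : ij.1 + ij.2 = k := by simpa using hij
    rw [D1_DD, D2_DD _ _ _ (by rw [hk]; exact h)]
    have : k.choose ij.2 = k.choose ij.1 := by
      rw [← hk]; exact (Nat.choose_symm_add).symm
    rw [this]; ring
  rw [e]
  unfold lineD
  apply HasDerivAt.fun_sum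
  intro ij hij
  have hk : ij.1 + ij.2 = k := by simpa using hij
  apply HasDerivAt.const_mul
  apply HasDerivAt.const_mul
  exact hasDerivAt_line (DD_contDiff _ _ 1 (by rw [hk]; exact h)) y w t

lemma taylor_sum_hasDerivAt (φ : ℕ → ℝ → ℝ) (m : ℕ)
    (h : ∀ k ≤ m, ∀ t, HasDerivAt (φ k) (φ (k + 1) t) t) (t : ℝ) :
    HasDerivAt (fun t => ∑ k ∈ Finset.range (m + 1), (1 - t) ^ k / (k.factorial : ℝ) * φ k t)
      ((1 - t) ^ m / (m.factorial : ℝ) * φ (m + 1) t) t := by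
  induction m with
  | zero => simpa using h 0 le_rfl t
  | succ m ih =>
    have h1 := ih (fun k hk => h k (by omega))
    simp_rw [Finset.sum_range_succ _ (m + 1)]
    have h2 : HasDerivAt (fun t : ℝ => (1 - t) ^ (m + 1) / ((m + 1).factorial : ℝ))
        (-((1 - t) ^ m / (m.factorial : ℝ))) t := by
      refine ((((hasDerivAt_id t).const_sub 1).pow (m + 1)).div_const
        ((m + 1).factorial : ℝ)).congr_deriv ?_
      rw [Nat.factorial_succ]; push_cast
      have : (m.factorial : ℝ) ≠ 0 := by positivity
      have : (m + 1 : ℝ) ≠ 0 := by positivity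
      simp
      field_simp
    have h3 := h1.add (h2.mul (h (m + 1) le_rfl t))
    refine h3.congr_deriv ?_
    ring

/-- the Taylor polynomial at `y`, evaluated at `x` -/
def tay (m : ℕ) (F : ℝ × ℝ → ℝ) (y x : ℝ × ℝ) : ℝ :=
  ∑ k ∈ Finset.range m, 1 / (k.factorial : ℝ) * lineD F y (x - y) k 0

lemma lineD_continuous {F : ℝ × ℝ → ℝ} (k : ℕ) (h : ContDiff ℝ (k : ℕ∞) F) :
    Continuous (fun q : (ℝ × ℝ) × (ℝ × ℝ) × ℝ => lineD F q.1 q.2.1 k q.2.2) := by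
  unfold lineD
  refine continuous_finsetSum _ fun ij hij => ?_
  have hk : ij.1 + ij.2 = k := by simpa using hij
  have : Continuous (DD ij.1 ij.2 F) := (DD_contDiff ij.1 ij.2 0 (by simpa [hk] using h)).continuous
  fun_prop

lemma taylor_rem {m : ℕ} (hm : 1 ≤ m) {F : ℝ × ℝ → ℝ} (h : ContDiff ℝ (m : ℕ∞) F)
    (x y : ℝ × ℝ) :
    F x - tay m F y x =
      ∫ s in (0:ℝ)..1, (1 - s) ^ (m - 1) / ((m - 1).factorial : ℝ) * lineD F y (x - y) m s := by
  obtain ⟨m, rfl⟩ : ∃ k, m = k + 1 := ⟨m - 1, by omega⟩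
  have h1 := taylor_sum_hasDerivAt (lineD F y (x - y)) m (fun k hk t =>
    lineD_hasDerivAt y (x - y) k (h.of_le (by norm_cast; omega)) t)
  have hc : Continuous (fun s => lineD F y (x - y) (m + 1) s) :=
    (lineD_continuous (m + 1) h).comp (by fun_prop : Continuous fun s : ℝ => (y, (x - y, s)))
  have h2 := intervalIntegral.integral_eq_sub_of_hasDerivAt (a := 0) (b := 1)
    (fun t _ => h1 t) (Continuous.intervalIntegrable (by fun_prop) _ _)
  simp only [Nat.add_sub_cancel]
  rw [h2]
  congr 1
  · rw [Finset.sum_range_succ']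
    simp [lineD, DD]
  · simp [tay]

/-- sum of squares of the order `m` derivatives -/
def SS (m : ℕ) (F : ℝ × ℝ → ℝ) (z : ℝ × ℝ) : ℝ :=
  ∑ a ∈ Finset.range (m + 1), (DD a (m - a) F z) ^ 2

lemma SS_nonneg (m : ℕ) (F : ℝ × ℝ → ℝ) (z : ℝ × ℝ) : 0 ≤ SS m F z :=
  Finset.sum_nonneg fun _ _ => sq_nonneg _

lemma SS_continuous {m : ℕ} {F : ℝ × ℝ → ℝ} (h : ContDiff ℝ (m : ℕ∞) F) : Continuous (SS m F) := by
  unfold SS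
  refine continuous_finsetSum _ fun a ha => ?_
  have hk : a + (m - a) = m := by simp at ha; omega
  have : Continuous (DD a (m - a) F) := (DD_contDiff a (m - a) 0 (by simpa [hk] using h)).continuous
  fun_prop

lemma lineD_sq_le (m : ℕ) (F : ℝ × ℝ → ℝ) (y w : ℝ × ℝ) (δ : ℝ) (hw1 : |w.1| ≤ δ) (hw2 : |w.2| ≤ δ)
    (s : ℝ) : (lineD F y w m s) ^ 2 ≤ 4 ^ m * δ ^ (2 * m) * SS m F (y + s • w) := by
  have hδ : 0 ≤ δ := (abs_nonneg _).trans hw1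
  unfold lineD SS
  rw [Finset.Nat.sum_antidiagonal_eq_sum_range_succ
    (f := fun a b => (m.choose a : ℝ) * (w.1 ^ a * w.2 ^ b * DD a b F (y + s • w)))]
  have e : ∀ a : ℕ, (m.choose a : ℝ) * (w.1 ^ a * w.2 ^ (m - a) * DD a (m - a) F (y + s • w)) =
      ((m.choose a : ℝ) * (w.1 ^ a * w.2 ^ (m - a))) * DD a (m - a) F (y + s • w) :=
    fun a => by ring
  simp_rw [e]
  refine (Finset.sum_mul_sq_le_sq_mul_sq _ _ _).trans ?_
  refine mul_le_mul_of_nonneg_right ?_ (Finset.sum_nonneg fun _ _ => sq_nonneg _)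
  calc ∑ a ∈ Finset.range (m + 1), ((m.choose a : ℝ) * (w.1 ^ a * w.2 ^ (m - a))) ^ 2
      ≤ ∑ a ∈ Finset.range (m + 1), (m.choose a : ℝ) ^ 2 * δ ^ (2 * m) := by
        refine Finset.sum_le_sum fun a ha => ?_
        rw [mul_pow]
        gcongr
        have hk : a + (m - a) = m := by simp at ha; omega
        have : |w.1 ^ a * w.2 ^ (m - a)| ≤ δ ^ m := by
          rw [abs_mul, abs_pow, abs_pow]
          calc |w.1| ^ a * |w.2| ^ (m - a) ≤ δ ^ a * δ ^ (m - a) := by gcongr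
            _ = δ ^ m := by rw [← pow_add, hk]
        rw [← sq_abs, mul_comm 2 m, pow_mul]
        gcongr
    _ = (∑ a ∈ Finset.range (m + 1), (m.choose a : ℝ) ^ 2) * δ ^ (2 * m) := by
        rw [Finset.sum_mul]
    _ ≤ 4 ^ m * δ ^ (2 * m) := by
        gcongr
        calc ∑ a ∈ Finset.range (m + 1), (m.choose a : ℝ) ^ 2
            ≤ (∑ a ∈ Finset.range (m + 1), (m.choose a : ℝ)) ^ 2 :=
              Finset.sum_sq_le_sq_sum_of_nonneg fun _ _ => by positivity
          _ = 4 ^ m := by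
              have := Nat.sum_range_choose m
              have h2 : (∑ a ∈ Finset.range (m + 1), (m.choose a : ℝ)) = 2 ^ m := by
                exact_mod_cast this
              rw [h2, ← pow_mul, mul_comm, pow_mul]; norm_num

lemma sq_integral_le (ψ : ℝ → ℝ) (hψ : Continuous ψ) :
    (∫ s in (0:ℝ)..1, ψ s) ^ 2 ≤ ∫ s in (0:ℝ)..1, ψ s ^ 2 := by
  set c := ∫ s in (0:ℝ)..1, ψ s with hc
  have h0 : 0 ≤ ∫ s in (0:ℝ)..1, (ψ s - c) ^ 2 :=
    intervalIntegral.integral_nonneg (by norm_num) fun _ _ => sq_nonneg _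
  have e : ∫ s in (0:ℝ)..1, (ψ s - c) ^ 2 = (∫ s in (0:ℝ)..1, ψ s ^ 2) - c ^ 2 := by
    have : ∀ s, (ψ s - c) ^ 2 = ψ s ^ 2 - (2 * c * ψ s - c ^ 2) := fun s => by ring
    simp_rw [this]
    rw [intervalIntegral.integral_sub (Continuous.intervalIntegrable (by fun_prop) _ _)
      (Continuous.intervalIntegrable (by fun_prop) _ _),
      intervalIntegral.integral_sub (Continuous.intervalIntegrable (by fun_prop) _ _)
      (Continuous.intervalIntegrable (by fun_prop) _ _), intervalIntegral.integral_const_mul, ← hc]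
    simp; ring
  linarith

lemma taylor_sq_le {m : ℕ} (hm : 1 ≤ m) {F : ℝ × ℝ → ℝ} (h : ContDiff ℝ (m : ℕ∞) F)
    (x y : ℝ × ℝ) (δ : ℝ) (h1 : |x.1 - y.1| ≤ δ) (h2 : |x.2 - y.2| ≤ δ) :
    (F x - tay m F y x) ^ 2 ≤ 4 ^ m * δ ^ (2 * m) *
      ∫ s in (0:ℝ)..1, (1 - s) ^ (2 * (m - 1)) * SS m F (s • x + (1 - s) • y) := by
  rw [taylor_rem hm h]
  have hc : Continuous (fun s => lineD F y (x - y) m s) :=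
    (lineD_continuous m h).comp (by fun_prop : Continuous fun s : ℝ => (y, (x - y, s)))
  have hS := SS_continuous h
  refine (sq_integral_le _ (by fun_prop)).trans ?_
  rw [← intervalIntegral.integral_const_mul]
  refine intervalIntegral.integral_mono_on (by norm_num)
    (Continuous.intervalIntegrable (by fun_prop) _ _)
    (Continuous.intervalIntegrable (by fun_prop) _ _) fun s hs => ?_
  have h3 := lineD_sq_le m F y (x - y) δ (by simpa using h1) (by simpa using h2) s
  have h4 : y + s • (x - y) = s • x + (1 - s) • y := by
    rw [smul_sub, sub_smul, one_smul]; abel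
  rw [h4] at h3
  rw [mul_pow]
  have h5 : ((1 - s) ^ (m - 1) / ((m - 1).factorial : ℝ)) ^ 2 ≤ (1 - s) ^ (2 * (m - 1)) := by
    rw [div_pow, ← pow_mul, mul_comm (m - 1) 2]
    apply div_le_self
    · have : 0 ≤ 1 - s := by linarith [hs.2]
      positivity
    · have : (1:ℝ) ≤ ((m - 1).factorial : ℝ) := by exact_mod_cast Nat.one_le_iff_ne_zero.mpr (Nat.factorial_ne_zero _)
      exact one_le_pow₀ this
  calc _ ≤ (1 - s) ^ (2 * (m - 1)) * (4 ^ m * δ ^ (2 * m) * SS m F (s • x + (1 - s) • y)) := by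
        gcongr
        have : 0 ≤ 1 - s := by linarith [hs.2]
        positivity
    _ = _ := by ring

end Census

namespace Census

lemma scale_le (Δ : Set (ℝ × ℝ)) (hΔ : IsCompact Δ) (hcv : Convex ℝ Δ) (f : ℝ × ℝ → ℝ)
    (hf : Continuous f) (hf0 : ∀ z, 0 ≤ f z) (x : ℝ × ℝ) (hx : x ∈ Δ) (s : ℝ) (hs0 : 0 ≤ s)
    (hs1 : s < 1) :
    (1 - s) ^ 2 * ∫ y in Δ, f (s • x + (1 - s) • y) ≤ ∫ y in Δ, f y := by
  have hms : MeasurableSet Δ := hΔ.isClosed.measurableSet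
  have hr : 0 < 1 - s := by linarith
  set φ : ℝ × ℝ → ℝ := Δ.indicator f with hφ
  have hφi : Integrable φ := (integrable_indicator_iff hms).mpr (hf.continuousOn.integrableOn_compact hΔ)
  have hi2 : Integrable (fun y => φ (s • x + (1 - s) • y)) :=
    (hφi.comp_add_left (s • x)).comp_smul hr.ne'
  have e : ∫ y, φ (s • x + (1 - s) • y) = ((1 - s) ^ 2)⁻¹ * ∫ y, φ y := by
    rw [Measure.integral_comp_smul volume (fun z => φ (s • x + z)) (1 - s),
      integral_add_left_eq_self]
    have : Module.finrank ℝ (ℝ × ℝ) = 2 := by simp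
    rw [this, abs_of_pos (by positivity), smul_eq_mul]
  have h1 : ∫ y in Δ, f (s • x + (1 - s) • y) ≤ ∫ y, φ (s • x + (1 - s) • y) := by
    rw [← integral_indicator hms]
    refine integral_mono ((integrable_indicator_iff hms).mpr ?_) hi2 fun y => ?_
    · exact (Continuous.continuousOn (by fun_prop)).integrableOn_compact hΔ
    · by_cases hy : y ∈ Δ
      · have : s • x + (1 - s) • y ∈ Δ := hcv hx hy hs0 hr.le (by ring)
        simp [hφ, hy, this]
      · rw [Set.indicator_of_notMem hy]
        exact Set.indicator_nonneg (fun z _ => hf0 z) _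
  rw [e, hφ, integral_indicator hms] at h1
  calc (1 - s) ^ 2 * ∫ y in Δ, f (s • x + (1 - s) • y)
      ≤ (1 - s) ^ 2 * (((1 - s) ^ 2)⁻¹ * ∫ y in Δ, f y) := by gcongr
    _ = _ := by field_simp

lemma tay_continuous {m : ℕ} {F : ℝ × ℝ → ℝ} (h : ContDiff ℝ (m : ℕ∞) F) (x : ℝ × ℝ) :
    Continuous (fun y => tay m F y x) := by
  unfold tay
  refine continuous_finsetSum _ fun k hk => ?_
  have hk' : k ≤ m := (Finset.mem_range.mp hk).le
  refine continuous_const.mul ?_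
  exact (lineD_continuous k (h.of_le (by norm_cast))).comp
    (by fun_prop : Continuous fun y : ℝ × ℝ => (y, (x - y, (0:ℝ))))

lemma taylor_L2 {m : ℕ} (hm : 2 ≤ m) {F : ℝ × ℝ → ℝ} (h : ContDiff ℝ (m : ℕ∞) F)
    (Δ : Set (ℝ × ℝ)) (hΔ : IsCompact Δ) (hcv : Convex ℝ Δ) (δ : ℝ) (x : ℝ × ℝ) (hx : x ∈ Δ)
    (hδ : ∀ y ∈ Δ, |x.1 - y.1| ≤ δ ∧ |x.2 - y.2| ≤ δ) :
    ∫ y in Δ, (F x - tay m F y x) ^ 2 ≤ 4 ^ m * δ ^ (2 * m) * ∫ y in Δ, SS m F y := by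
  have hms : MeasurableSet Δ := hΔ.isClosed.measurableSet
  have hS := SS_continuous h
  have hT := tay_continuous h x
  set H : ℝ × ℝ → ℝ → ℝ := fun y s => (1 - s) ^ (2 * (m - 1)) * SS m F (s • x + (1 - s) • y) with hH
  have hHc : Continuous (Function.uncurry H) := by
    rw [hH]; unfold Function.uncurry; fun_prop
  have hHi : Integrable (Function.uncurry H)
      ((volume.restrict Δ).prod (volume.restrict (Set.Ioc (0:ℝ) 1))) := by
    rw [Measure.prod_restrict]
    exact IntegrableOn.mono_set
      (hHc.continuousOn.integrableOn_compact (hΔ.prod isCompact_Icc) :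
        IntegrableOn _ (Δ ×ˢ Set.Icc (0:ℝ) 1) _)
      (Set.prod_mono le_rfl Set.Ioc_subset_Icc_self)
  have h1 : ∫ y in Δ, (F x - tay m F y x) ^ 2 ≤
      ∫ y in Δ, 4 ^ m * δ ^ (2 * m) * ∫ s in (0:ℝ)..1, H y s := by
    refine setIntegral_mono_on ?_ ?_ hms fun y hy => ?_
    · exact (Continuous.continuousOn (by fun_prop)).integrableOn_compact hΔ
    · refine Integrable.const_mul ?_ _
      simp_rw [intervalIntegral.integral_of_le (zero_le_one' ℝ)]
      exact hHi.integral_prod_left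
    · exact taylor_sq_le (by omega) h x y δ (hδ y hy).1 (hδ y hy).2
  refine h1.trans ?_
  rw [integral_const_mul]
  have hδ0 : 0 ≤ δ := (abs_nonneg _).trans (hδ x hx).1
  refine mul_le_mul_of_nonneg_left ?_ (by positivity)
  simp_rw [intervalIntegral.integral_of_le (zero_le_one' ℝ)]
  rw [integral_integral_swap hHi]
  set I := ∫ y in Δ, SS m F y with hI
  have hI0 : 0 ≤ I := integral_nonneg fun y => SS_nonneg m F y
  have h3 : ∀ s ∈ Set.Ioo (0:ℝ) 1, ∫ y in Δ, H y s ≤ I := by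
    intro s hs
    have h4 := scale_le Δ hΔ hcv (SS m F) hS (SS_nonneg m F) x hx s hs.1.le hs.2
    have hr : 0 ≤ 1 - s := by linarith [hs.2]
    calc ∫ y in Δ, H y s = (1 - s) ^ (2 * (m - 2)) *
          ((1 - s) ^ 2 * ∫ y in Δ, SS m F (s • x + (1 - s) • y)) := by
          rw [hH, integral_const_mul, ← mul_assoc, ← pow_add]
          congr 2; omega
      _ ≤ 1 * I := by
          gcongr
          · refine mul_nonneg (sq_nonneg _) (integral_nonneg fun y => SS_nonneg m F _)
          · exact pow_le_one₀ hr (by linarith [hs.1])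
      _ = I := one_mul _
  rw [integral_Ioc_eq_integral_Ioo]
  calc ∫ s in Set.Ioo (0:ℝ) 1, ∫ y in Δ, H y s ≤ ∫ s in Set.Ioo (0:ℝ) 1, I := by
        refine setIntegral_mono_on ?_ ?_ measurableSet_Ioo h3
        · exact IntegrableOn.mono_set (hHi.integral_prod_right : IntegrableOn _ (Set.Ioc (0:ℝ) 1) _)
            Set.Ioo_subset_Ioc_self
        · simp
    _ = I := by simp

/-- restrictions of polynomials to the points with index in `S` -/
def polyV {n : ℕ} (m : ℕ) (z : Fin n → ℝ × ℝ) (S : Finset (Fin n)) : Submodule ℝ (Fin n → ℝ) :=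
  Submodule.span ℝ (Set.range fun q : Fin m × Fin m => fun i : Fin n =>
    if i ∈ S then (z i).1 ^ (q.1 : ℕ) * (z i).2 ^ (q.2 : ℕ) else 0)

lemma polyV_finrank {n : ℕ} (m : ℕ) (z : Fin n → ℝ × ℝ) (S : Finset (Fin n)) :
    Module.finrank ℝ (polyV m z S) ≤ m ^ 2 := by
  refine (finrank_range_le_card _).trans ?_
  simp [sq]

lemma polyV_mem_tay {n : ℕ} (m : ℕ) (z : Fin n → ℝ × ℝ) (S : Finset (Fin n)) (F : ℝ × ℝ → ℝ)
    (y : ℝ × ℝ) : (fun i => if i ∈ S then tay m F y (z i) else 0) ∈ polyV m z S := by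
  have hmono : ∀ a b : ℕ, a < m → b < m →
      (fun i : Fin n => if i ∈ S then (z i).1 ^ a * (z i).2 ^ b else 0) ∈ polyV m z S := by
    intro a b ha hb
    exact Submodule.subset_span ⟨(⟨a, ha⟩, ⟨b, hb⟩), rfl⟩
  have hsh : ∀ a b : ℕ, a < m → b < m →
      (fun i : Fin n => if i ∈ S then ((z i).1 - y.1) ^ a * ((z i).2 - y.2) ^ b else 0) ∈
        polyV m z S := by
    intro a b ha hb
    have e : (fun i : Fin n => if i ∈ S then ((z i).1 - y.1) ^ a * ((z i).2 - y.2) ^ b else 0) =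
        ∑ c ∈ Finset.range (a + 1), ∑ d ∈ Finset.range (b + 1),
          (((-y.1) ^ (a - c) * a.choose c) * ((-y.2) ^ (b - d) * b.choose d)) •
          (fun i : Fin n => if i ∈ S then (z i).1 ^ c * (z i).2 ^ d else 0) := by
      funext i
      simp only [Finset.sum_apply, Pi.smul_apply, smul_eq_mul]
      by_cases hi : i ∈ S
      · simp only [hi, if_true]
        rw [sub_eq_add_neg, sub_eq_add_neg, add_pow, add_pow, Finset.sum_mul_sum]
        refine Finset.sum_congr rfl fun c _ => Finset.sum_congr rfl fun d _ => ?_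
        ring
      · simp [hi]
    rw [e]
    refine Submodule.sum_mem _ fun c hc => Submodule.sum_mem _ fun d hd =>
      Submodule.smul_mem _ _ (hmono c d ?_ ?_)
    · simp at hc; omega
    · simp at hd; omega
  have e : (fun i => if i ∈ S then tay m F y (z i) else 0) =
      ∑ k ∈ Finset.range m, ∑ ij ∈ Finset.HasAntidiagonal.antidiagonal k,
        (1 / (k.factorial : ℝ) * (k.choose ij.1 : ℝ) * DD ij.1 ij.2 F y) •
        (fun i : Fin n => if i ∈ S then ((z i).1 - y.1) ^ ij.1 * ((z i).2 - y.2) ^ ij.2 else 0) := by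
    funext i
    simp only [Finset.sum_apply, Pi.smul_apply, smul_eq_mul]
    by_cases hi : i ∈ S
    · simp only [hi, if_true, tay, lineD]
      refine Finset.sum_congr rfl fun k _ => ?_
      rw [Finset.mul_sum]
      refine Finset.sum_congr rfl fun ij _ => ?_
      simp
      ring
    · simp [hi]
  rw [e]
  refine Submodule.sum_mem _ fun k hk => Submodule.sum_mem _ fun ij hij =>
    Submodule.smul_mem _ _ (hsh _ _ ?_ ?_)
  · have : ij.1 + ij.2 = k := by simpa using hij
    simp at hk; omega
  · have : ij.1 + ij.2 = k := by simpa using hij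
    simp at hk; omega

/-- `Δ` with index set `S` admits an approximation space of dimension at most `N * m^2`
with squared error `E * ∫_Δ SS`. -/
def Appr {n : ℕ} (m : ℕ) (z : Fin n → ℝ × ℝ) (S : Finset (Fin n)) (Δ : Set (ℝ × ℝ))
    (N : ℕ) (E : ℝ) : Prop :=
  ∃ V : Submodule ℝ (Fin n → ℝ), Module.finrank ℝ V ≤ N * m ^ 2 ∧ (∀ v ∈ V, ∀ i ∉ S, v i = 0) ∧
    ∀ F : ℝ × ℝ → ℝ, ContDiff ℝ (m : ℕ∞) F → ∃ v ∈ V,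
      ∑ i ∈ S, (F (z i) - v i) ^ 2 ≤ E * ∫ y in Δ, SS m F y

/-- closed square -/
def cube (a b h : ℝ) : Set (ℝ × ℝ) := Set.Icc a (a + h) ×ˢ Set.Icc b (b + h)

lemma appr_leaf {n : ℕ} {m : ℕ} (hm : 2 ≤ m) (z : Fin n → ℝ × ℝ) (S : Finset (Fin n))
    (a b h : ℝ) (hh : 0 < h) (hS : ∀ i ∈ S, z i ∈ cube a b h) :
    Appr m z S (cube a b h) 1 (S.card * 4 ^ m * h ^ (2 * m - 2)) := by
  refine ⟨polyV m z S, by simpa using polyV_finrank m z S, ?_, ?_⟩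
  · intro v hv i hi
    have : polyV m z S ≤ LinearMap.ker (LinearMap.proj i : (Fin n → ℝ) →ₗ[ℝ] ℝ) := by
      unfold polyV
      rw [Submodule.span_le]
      rintro _ ⟨q, rfl⟩
      simp [hi]
    simpa using this hv
  · intro F hF
    have hΔ : IsCompact (cube a b h) := isCompact_Icc.prod isCompact_Icc
    have hcv : Convex ℝ (cube a b h) := (convex_Icc _ _).prod (convex_Icc _ _)
    have hvol : volume.real (cube a b h) = h ^ 2 := by
      rw [cube, Measure.volume_eq_prod, measureReal_prod_prod]
      simp [hh.le]; ring
    have hcT := fun i => tay_continuous hF (z i)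
    have hc : Continuous (fun y => ∑ i ∈ S, (F (z i) - tay m F y (z i)) ^ 2) := by
      refine continuous_finsetSum _ fun i _ => ?_
      have := hcT i
      fun_prop
    have hv0 : volume (cube a b h) ≠ 0 := by
      intro h0
      rw [Measure.real, h0] at hvol
      simp at hvol
      exact (pow_pos hh 2).ne hvol
    obtain ⟨y, hy, hle⟩ := exists_le_setAverage hv0 hΔ.measure_lt_top.ne
      (hc.continuousOn.integrableOn_compact hΔ)
    refine ⟨_, polyV_mem_tay m z S F y, ?_⟩
    have e1 : ∑ i ∈ S, (F (z i) - (if i ∈ S then tay m F y (z i) else 0)) ^ 2 =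
        ∑ i ∈ S, (F (z i) - tay m F y (z i)) ^ 2 :=
      Finset.sum_congr rfl fun i hi => by simp [hi]
    rw [e1]
    refine hle.trans ?_
    rw [setAverage_eq, hvol, smul_eq_mul, integral_finsetSum]
    · have h3 : ∀ i ∈ S, ∫ y in cube a b h, (F (z i) - tay m F y (z i)) ^ 2 ≤
          4 ^ m * h ^ (2 * m) * ∫ y in cube a b h, SS m F y := by
        intro i hi
        refine taylor_L2 hm hF _ hΔ hcv h (z i) (hS i hi) fun y hy => ?_
        obtain ⟨⟨p1, p2⟩, ⟨p3, p4⟩⟩ := hS i hi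
        obtain ⟨⟨q1, q2⟩, ⟨q3, q4⟩⟩ := hy
        simp only [abs_le]
        refine ⟨⟨?_, ?_⟩, ⟨?_, ?_⟩⟩ <;> linarith
      calc (h ^ 2)⁻¹ * ∑ i ∈ S, ∫ y in cube a b h, (F (z i) - tay m F y (z i)) ^ 2
          ≤ (h ^ 2)⁻¹ * ∑ i ∈ S, 4 ^ m * h ^ (2 * m) * ∫ y in cube a b h, SS m F y := by
            gcongr with i hi
            exact h3 i hi
        _ = _ := by
            rw [Finset.sum_const, nsmul_eq_mul]
            have : h ^ (2 * m) = h ^ 2 * h ^ (2 * m - 2) := by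
              rw [← pow_add]; congr 1; omega
            rw [this]
            field_simp
    · intro i _
      have := hcT i
      exact (Continuous.continuousOn (by fun_prop)).integrableOn_compact hΔ

lemma appr_merge {n : ℕ} {m : ℕ} (z : Fin n → ℝ × ℝ) (S S₁ S₂ : Finset (Fin n))
    (Δ Δ₁ Δ₂ : Set (ℝ × ℝ)) (N₁ N₂ : ℕ) (E : ℝ) (hE : 0 ≤ E)
    (hS : S = S₁ ∪ S₂) (hd : Disjoint S₁ S₂)
    (hΔ : ∀ F : ℝ × ℝ → ℝ, ContDiff ℝ (m : ℕ∞) F →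
      (∫ y in Δ₁, SS m F y) + ∫ y in Δ₂, SS m F y ≤ ∫ y in Δ, SS m F y)
    (h1 : Appr m z S₁ Δ₁ N₁ E) (h2 : Appr m z S₂ Δ₂ N₂ E) :
    Appr m z S Δ (N₁ + N₂) E := by
  obtain ⟨V₁, hr1, hs1, ha1⟩ := h1
  obtain ⟨V₂, hr2, hs2, ha2⟩ := h2
  refine ⟨V₁ ⊔ V₂, ?_, ?_, ?_⟩
  · refine (Submodule.finrank_add_le_finrank_add_finrank V₁ V₂).trans ?_
    rw [add_mul]; omega
  · intro v hv i hi
    obtain ⟨v1, hv1, v2, hv2, rfl⟩ := Submodule.mem_sup.mp hv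
    rw [hS, Finset.mem_union, not_or] at hi
    simp [hs1 v1 hv1 i hi.1, hs2 v2 hv2 i hi.2]
  · intro F hF
    obtain ⟨v1, hv1, he1⟩ := ha1 F hF
    obtain ⟨v2, hv2, he2⟩ := ha2 F hF
    refine ⟨v1 + v2, Submodule.add_mem_sup hv1 hv2, ?_⟩
    rw [hS, Finset.sum_union hd]
    have e1 : ∑ i ∈ S₁, (F (z i) - (v1 + v2) i) ^ 2 = ∑ i ∈ S₁, (F (z i) - v1 i) ^ 2 := by
      refine Finset.sum_congr rfl fun i hi => ?_
      simp [hs2 v2 hv2 i (Finset.disjoint_left.mp hd hi)]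
    have e2 : ∑ i ∈ S₂, (F (z i) - (v1 + v2) i) ^ 2 = ∑ i ∈ S₂, (F (z i) - v2 i) ^ 2 := by
      refine Finset.sum_congr rfl fun i hi => ?_
      simp [hs1 v1 hv1 i (Finset.disjoint_right.mp hd hi)]
    rw [e1, e2]
    calc _ ≤ E * (∫ y in Δ₁, SS m F y) + E * ∫ y in Δ₂, SS m F y := add_le_add he1 he2
      _ = E * ((∫ y in Δ₁, SS m F y) + ∫ y in Δ₂, SS m F y) := by ring
      _ ≤ _ := mul_le_mul_of_nonneg_left (hΔ F hF) hE

end Census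

namespace Census

lemma appr_mono {n m : ℕ} {z : Fin n → ℝ × ℝ} {S : Finset (Fin n)} {Δ : Set (ℝ × ℝ)} {N : ℕ}
    {E E' : ℝ} (hE : E ≤ E') (h : Appr m z S Δ N E) : Appr m z S Δ N E' := by
  obtain ⟨V, h1, h2, h3⟩ := h
  refine ⟨V, h1, h2, fun F hF => ?_⟩
  obtain ⟨v, hv, he⟩ := h3 F hF
  exact ⟨v, hv, he.trans (mul_le_mul_of_nonneg_right hE
    (integral_nonneg fun y => SS_nonneg m F y))⟩

lemma integral_two (f : ℝ × ℝ → ℝ) (hf : Continuous f) (hf0 : ∀ z, 0 ≤ f z)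
    (Δ Δ₁ Δ₂ Δ₁' : Set (ℝ × ℝ)) (hΔ : IsCompact Δ) (hΔ₂ : MeasurableSet Δ₂)
    (hae : Δ₁ =ᵐ[volume] Δ₁') (hdis : Disjoint Δ₁' Δ₂)
    (h1 : Δ₁' ⊆ Δ) (h2 : Δ₂ ⊆ Δ) :
    (∫ y in Δ₁, f y) + ∫ y in Δ₂, f y ≤ ∫ y in Δ, f y := by
  have hi : IntegrableOn f Δ := hf.continuousOn.integrableOn_compact hΔ
  rw [setIntegral_congr_set hae, ← setIntegral_union hdis hΔ₂ (hi.mono_set h1) (hi.mono_set h2)]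
  exact setIntegral_mono_set hi (Filter.Eventually.of_forall hf0)
    (Filter.Eventually.of_forall (Set.union_subset h1 h2))

lemma integral_split_fst (f : ℝ × ℝ → ℝ) (hf : Continuous f) (hf0 : ∀ z, 0 ≤ f z)
    (a c b d e : ℝ) (hac : a ≤ c) (hcb : c ≤ b) :
    (∫ y in Set.Icc a c ×ˢ Set.Icc d e, f y) + ∫ y in Set.Icc c b ×ˢ Set.Icc d e, f y ≤
      ∫ y in Set.Icc a b ×ˢ Set.Icc d e, f y := by
  refine integral_two f hf hf0 _ _ _ (Set.Ico a c ×ˢ Set.Icc d e) (isCompact_Icc.prod isCompact_Icc)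
    (measurableSet_Icc.prod measurableSet_Icc) ?_ ?_ ?_ ?_
  · rw [Measure.volume_eq_prod]
    exact Measure.set_prod_ae_eq Ico_ae_eq_Icc.symm (Filter.EventuallyEq.refl _ _)
  · rw [Set.disjoint_left]
    rintro ⟨u, v⟩ ⟨h1, _⟩ ⟨h2, _⟩
    exact absurd h1.2 (not_lt.mpr h2.1)
  · exact Set.prod_mono (fun u hu => ⟨hu.1, hu.2.le.trans hcb⟩) le_rfl
  · exact Set.prod_mono (Set.Icc_subset_Icc_left hac) le_rfl

lemma integral_split_snd (f : ℝ × ℝ → ℝ) (hf : Continuous f) (hf0 : ∀ z, 0 ≤ f z)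
    (a c b d e : ℝ) (hac : a ≤ c) (hcb : c ≤ b) :
    (∫ y in Set.Icc d e ×ˢ Set.Icc a c, f y) + ∫ y in Set.Icc d e ×ˢ Set.Icc c b, f y ≤
      ∫ y in Set.Icc d e ×ˢ Set.Icc a b, f y := by
  refine integral_two f hf hf0 _ _ _ (Set.Icc d e ×ˢ Set.Ico a c) (isCompact_Icc.prod isCompact_Icc)
    (measurableSet_Icc.prod measurableSet_Icc) ?_ ?_ ?_ ?_
  · rw [Measure.volume_eq_prod]
    exact Measure.set_prod_ae_eq (Filter.EventuallyEq.refl _ _) Ico_ae_eq_Icc.symm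
  · rw [Set.disjoint_left]
    rintro ⟨u, v⟩ ⟨_, h1⟩ ⟨_, h2⟩
    exact absurd h1.2 (not_lt.mpr h2.1)
  · exact Set.prod_mono le_rfl (fun u hu => ⟨hu.1, hu.2.le.trans hcb⟩)
  · exact Set.prod_mono le_rfl (Set.Icc_subset_Icc_left hac)

lemma appr_split {n m : ℕ} (z : Fin n → ℝ × ℝ) (S : Finset (Fin n)) (a b h : ℝ) (hh : 0 < h)
    (hS : ∀ i ∈ S, z i ∈ cube a b (2 * h)) :
    ∃ S₁ S₂ S₃ S₄ : Finset (Fin n), S.card = S₁.card + S₂.card + (S₃.card + S₄.card) ∧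
      (∀ i ∈ S₁, z i ∈ cube a b h) ∧ (∀ i ∈ S₂, z i ∈ cube a (b + h) h) ∧
      (∀ i ∈ S₃, z i ∈ cube (a + h) b h) ∧ (∀ i ∈ S₄, z i ∈ cube (a + h) (b + h) h) ∧
      ∀ (N₁ N₂ N₃ N₄ : ℕ) (E : ℝ), 0 ≤ E → Appr m z S₁ (cube a b h) N₁ E →
        Appr m z S₂ (cube a (b + h) h) N₂ E → Appr m z S₃ (cube (a + h) b h) N₃ E →
        Appr m z S₄ (cube (a + h) (b + h) h) N₄ E →
        Appr m z S (cube a b (2 * h)) (N₁ + N₂ + (N₃ + N₄)) E := by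
  classical
  set A := S.filter (fun i => (z i).1 ≤ a + h) with hA
  set A' := S.filter (fun i => ¬ (z i).1 ≤ a + h) with hA'
  have c0 : A.card + A'.card = S.card := Finset.card_filter_add_card_filter_not _
  have c1 := Finset.card_filter_add_card_filter_not (s := A) (fun i => (z i).2 ≤ b + h)
  have c2 := Finset.card_filter_add_card_filter_not (s := A') (fun i => (z i).2 ≤ b + h)
  refine ⟨A.filter (fun i => (z i).2 ≤ b + h), A.filter (fun i => ¬ (z i).2 ≤ b + h),
    A'.filter (fun i => (z i).2 ≤ b + h), A'.filter (fun i => ¬ (z i).2 ≤ b + h),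
    by omega, ?_, ?_, ?_, ?_, ?_⟩
  · intro i hi
    simp only [hA, Finset.mem_filter] at hi
    obtain ⟨⟨p1, p2⟩, ⟨p3, p4⟩⟩ := hS i hi.1.1
    exact ⟨⟨p1, hi.1.2⟩, ⟨p3, hi.2⟩⟩
  · intro i hi
    simp only [hA, Finset.mem_filter] at hi
    obtain ⟨⟨p1, p2⟩, ⟨p3, p4⟩⟩ := hS i hi.1.1
    exact ⟨⟨p1, hi.1.2⟩, ⟨by linarith [hi.2], by linarith⟩⟩
  · intro i hi
    simp only [hA', Finset.mem_filter] at hi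
    obtain ⟨⟨p1, p2⟩, ⟨p3, p4⟩⟩ := hS i hi.1.1
    exact ⟨⟨by linarith [hi.1.2], by linarith⟩, ⟨p3, hi.2⟩⟩
  · intro i hi
    simp only [hA', Finset.mem_filter] at hi
    obtain ⟨⟨p1, p2⟩, ⟨p3, p4⟩⟩ := hS i hi.1.1
    exact ⟨⟨by linarith [hi.1.2], by linarith⟩, ⟨by linarith [hi.2], by linarith⟩⟩
  · intro N₁ N₂ N₃ N₄ E hE h1 h2 h3 h4
    have m1 := appr_merge z A _ _ (Set.Icc a (a + h) ×ˢ Set.Icc b (b + 2 * h)) _ _ N₁ N₂ E hE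
      (Finset.filter_union_filter_not_eq (fun i => (z i).2 ≤ b + h) A).symm
      (Finset.disjoint_filter_filter_not _ _ _) (fun F hF => by
        have := integral_split_snd (SS m F) (SS_continuous hF) (SS_nonneg m F) b (b + h)
          (b + h + h) a (a + h) (by linarith) (by linarith)
        have e : b + 2 * h = b + h + h := by ring
        rw [e]; exact this) h1 h2
    have m2 := appr_merge z A' _ _ (Set.Icc (a + h) (a + h + h) ×ˢ Set.Icc b (b + 2 * h)) _ _
      N₃ N₄ E hE
      (Finset.filter_union_filter_not_eq (fun i => (z i).2 ≤ b + h) A').symm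
      (Finset.disjoint_filter_filter_not _ _ _) (fun F hF => by
        have := integral_split_snd (SS m F) (SS_continuous hF) (SS_nonneg m F) b (b + h)
          (b + h + h) (a + h) (a + h + h) (by linarith) (by linarith)
        have e : b + 2 * h = b + h + h := by ring
        rw [e]; exact this) h3 h4
    exact appr_merge z S _ _ (cube a b (2 * h)) _ _ (N₁ + N₂) (N₃ + N₄) E hE
      (Finset.filter_union_filter_not_eq (fun i => (z i).1 ≤ a + h) S).symm
      (Finset.disjoint_filter_filter_not _ _ _) (fun F hF => by
        have := integral_split_fst (SS m F) (SS_continuous hF) (SS_nonneg m F) a (a + h)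
          (a + h + h) b (b + 2 * h) (by linarith) (by linarith)
        have e : a + 2 * h = a + h + h := by ring
        unfold cube
        rw [e]; exact this) m1 m2

lemma appr_fine {n m : ℕ} (hn : 1 ≤ n) (hm : 2 ≤ m) (L : ℕ) (z : Fin n → ℝ × ℝ) (j : ℕ) :
    ∀ (l : ℕ) (S : Finset (Fin n)) (a b : ℝ), (4:ℝ) ^ (L * m) / 4 ^ ((l + j) * (m - 1)) ≤ 1 →
      (∀ i ∈ S, z i ∈ cube a b ((1 / 2) ^ l)) →
      ∃ N : ℕ, (N : ℝ) ≤ 1 + 4 * (S.card / n) * (4 ^ (L * m) / 4 ^ (l * (m - 1))) ∧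
        Appr m z S (cube a b ((1 / 2) ^ l)) N (n * 4 ^ m / 4 ^ (L * m)) := by
  have hn0 : (0:ℝ) < n := by exact_mod_cast hn
  have leaf : ∀ (l : ℕ) (S : Finset (Fin n)) (a b : ℝ),
      (S.card / n : ℝ) * (4 ^ (L * m) / 4 ^ (l * (m - 1))) ≤ 1 →
      (∀ i ∈ S, z i ∈ cube a b ((1 / 2) ^ l)) →
      ∃ N : ℕ, (N : ℝ) ≤ 1 + 4 * (S.card / n) * (4 ^ (L * m) / 4 ^ (l * (m - 1))) ∧
        Appr m z S (cube a b ((1 / 2) ^ l)) N (n * 4 ^ m / 4 ^ (L * m)) := by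
    intro l S a b hle hS
    refine ⟨1, ?_, appr_mono ?_ (appr_leaf hm z S a b _ (by positivity) hS)⟩
    · have : (0:ℝ) ≤ 4 * (S.card / n) * (4 ^ (L * m) / 4 ^ (l * (m - 1))) := by positivity
      push_cast; linarith
    · have e : ((1 / 2 : ℝ) ^ l) ^ (2 * m - 2) = 1 / 4 ^ (l * (m - 1)) := by
        have : 2 * m - 2 = 2 * (m - 1) := by omega
        rw [this, ← pow_mul, mul_comm l, mul_assoc, pow_mul, mul_comm (m - 1) l]
        norm_num
        rw [one_div, inv_pow]
      rw [e]
      have h1 : (S.card : ℝ) * 4 ^ m * (1 / 4 ^ (l * (m - 1))) =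
          (n * 4 ^ m / 4 ^ (L * m)) * ((S.card / n : ℝ) * (4 ^ (L * m) / 4 ^ (l * (m - 1)))) := by
        field_simp
      rw [h1]
      exact mul_le_of_le_one_right (by positivity) hle
  induction j with
  | zero =>
    intro l S a b hs hS
    refine leaf l S a b ?_ hS
    have : (S.card / n : ℝ) ≤ 1 := by
      rw [div_le_one hn0]
      exact_mod_cast (Finset.card_le_univ S).trans (by simp)
    exact mul_le_one₀ this (by positivity) (by simpa using hs)
  | succ j ih =>
    intro l S a b hs hS
    by_cases hle : (S.card / n : ℝ) * (4 ^ (L * m) / 4 ^ (l * (m - 1))) ≤ 1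
    · exact leaf l S a b hle hS
    · push Not at hle
      have hl : (1 / 2 : ℝ) ^ l = 2 * (1 / 2) ^ (l + 1) := by rw [pow_succ]; ring
      rw [hl] at hS ⊢
      obtain ⟨S₁, S₂, S₃, S₄, hc, k1, k2, k3, k4, hm4⟩ :=
        appr_split (m := m) z S a b ((1 / 2) ^ (l + 1)) (by positivity) hS
      have hs' : (4:ℝ) ^ (L * m) / 4 ^ ((l + 1 + j) * (m - 1)) ≤ 1 := by
        convert hs using 4; ring
      obtain ⟨N₁, b1, a1⟩ := ih (l + 1) S₁ _ _ hs' k1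
      obtain ⟨N₂, b2, a2⟩ := ih (l + 1) S₂ _ _ hs' k2
      obtain ⟨N₃, b3, a3⟩ := ih (l + 1) S₃ _ _ hs' k3
      obtain ⟨N₄, b4, a4⟩ := ih (l + 1) S₄ _ _ hs' k4
      refine ⟨_, ?_, hm4 N₁ N₂ N₃ N₄ _ (by positivity) a1 a2 a3 a4⟩
      set s := (4:ℝ) ^ (L * m) / 4 ^ (l * (m - 1)) with hsdef
      set s' := (4:ℝ) ^ (L * m) / 4 ^ ((l + 1) * (m - 1)) with hsdef'
      have hss : s' ≤ s / 4 := by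
        have : s' = s / 4 ^ (m - 1) := by
          rw [hsdef, hsdef', add_mul, one_mul, pow_add]; field_simp
        rw [this]
        have hs0 : 0 ≤ s := by positivity
        gcongr
        calc (4:ℝ) = 4 ^ 1 := by norm_num
          _ ≤ 4 ^ (m - 1) := pow_le_pow_right₀ (by norm_num) (by omega)
      have hcr : (S.card : ℝ) = S₁.card + S₂.card + (S₃.card + S₄.card) := by exact_mod_cast hc
      have h5 : (((N₁ + N₂ + (N₃ + N₄) : ℕ)) : ℝ) ≤ 4 + 4 * (S.card / n) * s' := by
        push_cast
        rw [hcr]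
        have : 4 * ((S₁.card + S₂.card + (S₃.card + S₄.card) : ℝ) / n) * s' =
          4 * (S₁.card / n) * s' + 4 * (S₂.card / n) * s' + (4 * (S₃.card / n) * s'
            + 4 * (S₄.card / n) * s') := by ring
        linarith
      have h6 : 4 * (S.card / n : ℝ) * s' ≤ 4 * (S.card / n) * (s / 4) := by gcongr
      nlinarith

lemma appr_coarse {n m : ℕ} (hn : 1 ≤ n) (hm : 2 ≤ m) (L : ℕ) (z : Fin n → ℝ × ℝ) (j : ℕ) :
    ∀ (l : ℕ) (S : Finset (Fin n)) (a b : ℝ), l + j = L →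
      (∀ i ∈ S, z i ∈ cube a b ((1 / 2) ^ l)) →
      ∃ N : ℕ, (N : ℝ) ≤ 4 ^ j + 4 * (S.card / n) * 4 ^ L ∧
        Appr m z S (cube a b ((1 / 2) ^ l)) N (n * 4 ^ m / 4 ^ (L * m)) := by
  induction j with
  | zero =>
    intro l S a b hl hS
    have hl' : l = L := by omega
    subst hl'
    obtain ⟨N, h1, h2⟩ := appr_fine hn hm l z (l * m) l S a b (by
      rw [div_le_one (by positivity)]
      apply pow_le_pow_right₀ (by norm_num)
      have : 1 ≤ m - 1 := by omega
      calc l * m ≤ (l + l * m) * 1 := by omega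
        _ ≤ (l + l * m) * (m - 1) := Nat.mul_le_mul_left _ this) hS
    refine ⟨N, ?_, h2⟩
    have : (4:ℝ) ^ (l * m) / 4 ^ (l * (m - 1)) = 4 ^ l := by
      rw [div_eq_iff (by positivity), ← pow_add]
      congr 1
      obtain ⟨k, rfl⟩ : ∃ k, m = k + 1 := ⟨m - 1, by omega⟩
      simp; ring
    rw [this] at h1
    simpa using h1
  | succ j ih =>
    intro l S a b hlL hS
    have hl : (1 / 2 : ℝ) ^ l = 2 * (1 / 2) ^ (l + 1) := by rw [pow_succ]; ring
    rw [hl] at hS ⊢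
    obtain ⟨S₁, S₂, S₃, S₄, hc, k1, k2, k3, k4, hm4⟩ :=
      appr_split (m := m) z S a b ((1 / 2) ^ (l + 1)) (by positivity) hS
    have hs' : l + 1 + j = L := by omega
    obtain ⟨N₁, b1, a1⟩ := ih (l + 1) S₁ _ _ hs' k1
    obtain ⟨N₂, b2, a2⟩ := ih (l + 1) S₂ _ _ hs' k2
    obtain ⟨N₃, b3, a3⟩ := ih (l + 1) S₃ _ _ hs' k3
    obtain ⟨N₄, b4, a4⟩ := ih (l + 1) S₄ _ _ hs' k4
    refine ⟨_, ?_, hm4 N₁ N₂ N₃ N₄ _ (by positivity) a1 a2 a3 a4⟩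
    have hcr : (S.card : ℝ) = S₁.card + S₂.card + (S₃.card + S₄.card) := by exact_mod_cast hc
    push_cast
    rw [hcr, pow_succ]
    have : 4 * ((S₁.card + S₂.card + (S₃.card + S₄.card) : ℝ) / n) * 4 ^ L =
      4 * (S₁.card / n) * 4 ^ L + 4 * (S₂.card / n) * 4 ^ L + (4 * (S₃.card / n) * 4 ^ L
        + 4 * (S₄.card / n) * 4 ^ L) := by ring
    linarith

lemma Omega2M_eq (m : ℕ) (g : ℝ → ℝ → ℝ)
    (h : ContDiff ℝ (m : ℕ∞) (fun q : ℝ × ℝ => g q.1 q.2)) :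
    Omega2M m g = ∫ y in cube 0 0 1, SS m (fun q : ℝ × ℝ => g q.1 q.2) y := by
  unfold Omega2M SS cube
  simp only [zero_add]
  rw [integral_finsetSum]
  · refine Finset.sum_congr rfl fun a ha => ?_
    have hk : a + (m - a) = m := by simp at ha; omega
    have : ∀ q : ℝ × ℝ, pd a (m - a) g q.1 q.2 = DD a (m - a) (fun q : ℝ × ℝ => g q.1 q.2) q :=
      fun q => pd_eq_DD a (m - a) g (by rw [hk]; exact h) q.1 q.2
    simp_rw [this]
  · intro a ha
    have hk : a + (m - a) = m := by simp at ha; omega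
    have : Continuous (DD a (m - a) (fun q : ℝ × ℝ => g q.1 q.2)) :=
      (DD_contDiff a (m - a) 0 (by simpa [hk] using h)).continuous
    exact (Continuous.continuousOn (by fun_prop)).integrableOn_compact
      (isCompact_Icc.prod isCompact_Icc)

/-- Birman–Solomyak type linear approximation for an arbitrary design. -/
lemma appr_main {n m : ℕ} (hn : 1 ≤ n) (hm : 2 ≤ m) (L : ℕ) (z : Fin n → ℝ × ℝ)
    (hz : ∀ i, z i ∈ Set.Icc (0:ℝ) 1 ×ˢ Set.Icc (0:ℝ) 1) :
    ∃ V : Submodule ℝ (Fin n → ℝ), Module.finrank ℝ V ≤ 5 * m ^ 2 * 4 ^ L ∧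
      ∀ g : ℝ → ℝ → ℝ, ContDiff ℝ (m : ℕ∞) (fun q : ℝ × ℝ => g q.1 q.2) → ∃ v ∈ V,
        normN (fun i => g (z i).1 (z i).2 - v i) ≤
          2 ^ m / 2 ^ (L * m) * √(Omega2M m g) := by
  have hn0 : (0:ℝ) < n := by exact_mod_cast hn
  obtain ⟨N, hN, V, h1, -, h3⟩ := appr_coarse hn hm L z L 0 Finset.univ 0 0 (by omega)
    (fun i _ => by simpa [cube] using hz i)
  have hN' : N ≤ 5 * 4 ^ L := by
    have : (N : ℝ) ≤ 5 * 4 ^ L := by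
      refine hN.trans (le_of_eq ?_)
      simp only [Finset.card_univ, Fintype.card_fin]
      rw [div_self hn0.ne']; ring
    exact_mod_cast this
  refine ⟨V, h1.trans ?_, fun g hg => ?_⟩
  · calc N * m ^ 2 ≤ 5 * 4 ^ L * m ^ 2 := Nat.mul_le_mul_right _ hN'
      _ = _ := by ring
  · obtain ⟨v, hv, he⟩ := h3 _ hg
    refine ⟨v, hv, ?_⟩
    have e1 : cube 0 0 ((1 / 2) ^ 0) = cube 0 0 1 := by simp
    rw [e1, ← Omega2M_eq m g hg] at he
    have hO : 0 ≤ Omega2M m g := by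
      rw [Omega2M_eq m g hg]
      exact integral_nonneg fun y => SS_nonneg m _ y
    rw [normN, Real.sqrt_le_left (by positivity), mul_pow, Real.sq_sqrt hO, normSqN]
    calc _ ≤ 1 / (n:ℝ) * (n * 4 ^ m / 4 ^ (L * m) * Omega2M m g) := by gcongr
      _ = _ := by
        have p1 : ∀ k : ℕ, ((2:ℝ) ^ k) ^ 2 = 4 ^ k := fun k => by
          rw [← pow_mul, mul_comm, pow_mul]; norm_num
        rw [div_pow, p1, p1]
        field_simp

end Census

namespace Census

lemma normN_eq {n : ℕ} (v : Fin n → ℝ) :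
    normN v = √(1 / n) * ‖(WithLp.toLp 2 v : EuclideanSpace ℝ (Fin n))‖ := by
  rw [normN, normSqN, Real.sqrt_mul (by positivity), EuclideanSpace.norm_eq]
  simp

lemma normN_nonneg {n : ℕ} (v : Fin n → ℝ) : 0 ≤ normN v := Real.sqrt_nonneg _

lemma normN_add_le {n : ℕ} (u v : Fin n → ℝ) : normN (u + v) ≤ normN u + normN v := by
  rw [normN_eq, normN_eq, normN_eq, ← mul_add, WithLp.toLp_add]
  gcongr
  exact norm_add_le _ _

lemma normN_neg {n : ℕ} (u : Fin n → ℝ) : normN (-u) = normN u := by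
  simp [normN, normSqN]

lemma normN_sub_comm {n : ℕ} (u v : Fin n → ℝ) : normN (u - v) = normN (v - u) := by
  rw [← neg_sub, normN_neg]

lemma normN_sum_le {n : ℕ} {ι : Type*} (J : Finset ι) (u : ι → Fin n → ℝ) :
    normN (∑ q ∈ J, u q) ≤ ∑ q ∈ J, normN (u q) := by
  classical
  induction J using Finset.induction_on with
  | empty => simp [normN, normSqN]
  | insert a s ha ih =>
    rw [Finset.sum_insert ha, Finset.sum_insert ha]
    exact (normN_add_le _ _).trans (by gcongr)

lemma innerN_add {n : ℕ} (x u v : Fin n → ℝ) : innerN x (u + v) = innerN x u + innerN x v := by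
  simp only [innerN, Pi.add_apply, mul_add, Finset.sum_add_distrib]

lemma innerN_sum {n : ℕ} {ι : Type*} (J : Finset ι) (x : Fin n → ℝ) (u : ι → Fin n → ℝ) :
    innerN x (∑ q ∈ J, u q) = ∑ q ∈ J, innerN x (u q) := by
  classical
  induction J using Finset.induction_on with
  | empty => simp [innerN]
  | insert a s ha ih =>
    rw [Finset.sum_insert ha, Finset.sum_insert ha, innerN_add, ih]

lemma innerN_le {n : ℕ} (u v : Fin n → ℝ) : innerN u v ≤ normN u * normN v := by
  rw [normN, normN, ← Real.sqrt_mul (by unfold normSqN; positivity)]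
  apply Real.le_sqrt_of_sq_le
  rw [innerN, normSqN, normSqN, mul_pow]
  have := Finset.sum_mul_sq_le_sq_mul_sq Finset.univ u v
  calc _ ≤ (1 / (n:ℝ)) ^ 2 * ((∑ i, u i ^ 2) * ∑ i, v i ^ 2) := by gcongr
    _ = _ := by ring

lemma chain_bound {n : ℕ} (ξ g : Fin n → ℝ) (v : ℕ → Fin n → ℝ) (a s : ℝ) (ha : 0 ≤ a)
    (hs : 0 ≤ s) (hv : ∀ i, normN (g - v i) ≤ s * (1 / 4) ^ i)
    (hg : ∀ i, innerN ξ (v (i + 1) - v i) ≤ 2 ^ i * a * normN (v (i + 1) - v i)) :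
    innerN ξ (g - v 0) ≤ 4 * a * s := by
  have step : ∀ I : ℕ, innerN ξ (v I - v 0) ≤ 4 * a * s * (1 - (1 / 2) ^ I) := by
    intro I
    induction I with
    | zero => simp [innerN]
    | succ I ih =>
      have e : v (I + 1) - v 0 = (v (I + 1) - v I) + (v I - v 0) := by abel
      rw [e, innerN_add]
      have e2 : v (I + 1) - v I = (v (I + 1) - g) + (g - v I) := by abel
      have h1 : normN (v (I + 1) - v I) ≤ 2 * s * (1 / 4) ^ I := by
        rw [e2]
        refine (normN_add_le _ _).trans ?_
        rw [normN_sub_comm]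
        have h2 := hv I
        have h3 := hv (I + 1)
        have h4 : s * (1 / 4) ^ (I + 1) ≤ s * (1 / 4) ^ I := by
          rw [pow_succ]
          have : 0 ≤ s * (1 / 4) ^ I := by positivity
          linarith
        linarith
      have h5 : innerN ξ (v (I + 1) - v I) ≤ 2 ^ I * a * (2 * s * (1 / 4) ^ I) :=
        (hg I).trans (by gcongr)
      have h6 : (2:ℝ) ^ I * a * (2 * s * (1 / 4) ^ I) = 2 * a * s * (1 / 2) ^ I := by
        have : (2:ℝ) ^ I * (1 / 4) ^ I = (1 / 2) ^ I := by rw [← mul_pow]; norm_num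
        rw [← this]; ring
      rw [h6] at h5
      rw [pow_succ]
      linarith
  have lim : ∀ I : ℕ, innerN ξ (g - v 0) ≤ 4 * a * s + normN ξ * (s * (1 / 4) ^ I) := by
    intro I
    have e : g - v 0 = (g - v I) + (v I - v 0) := by abel
    rw [e, innerN_add]
    have h1 := step I
    have h2 := innerN_le ξ (g - v I)
    have h3 : normN ξ * normN (g - v I) ≤ normN ξ * (s * (1 / 4) ^ I) :=
      mul_le_mul_of_nonneg_left (hv I) (normN_nonneg _)
    have h4 : 0 ≤ 4 * a * s * (1 / 2) ^ I := by positivity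
    linarith
  refine ge_of_tendsto' (f := fun I : ℕ => 4 * a * s + normN ξ * (s * (1 / 4) ^ I))
    (x := Filter.atTop) ?_ lim
  have h := tendsto_pow_atTop_nhds_zero_of_lt_one (r := (1 / 4 : ℝ)) (by norm_num) (by norm_num)
  have := ((h.const_mul s).const_mul (normN ξ)).const_add (4 * a * s)
  simpa using this

lemma det_bound {n : ℕ} {ι : Type*} (J : Finset ι) (ξ : Fin n → ℝ) (g : ι → Fin n → ℝ)
    (v : ι → ℕ → Fin n → ℝ) (s : ι → ℝ) (a : ℝ) (ha : 0 ≤ a) (hs : ∀ q, 0 ≤ s q)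
    (hv : ∀ q ∈ J, ∀ i, normN (g q - v q i) ≤ s q * (1 / 4) ^ i)
    (hg : ∀ q ∈ J, ∀ i, innerN ξ (v q (i + 1) - v q i) ≤
      2 ^ i * a * normN (v q (i + 1) - v q i))
    (h0 : innerN ξ (∑ q ∈ J, v q 0) ≤ a * normN (∑ q ∈ J, v q 0)) :
    innerN ξ (∑ q ∈ J, g q) ≤ a * normN (∑ q ∈ J, g q) + 5 * a * ∑ q ∈ J, s q := by
  have e : ∑ q ∈ J, g q = ∑ q ∈ J, v q 0 + ∑ q ∈ J, (g q - v q 0) := by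
    rw [← Finset.sum_add_distrib]; simp
  have h1 : innerN ξ (∑ q ∈ J, (g q - v q 0)) ≤ 4 * a * ∑ q ∈ J, s q := by
    rw [innerN_sum, Finset.mul_sum]
    exact Finset.sum_le_sum fun q hq => chain_bound ξ (g q) (v q) a (s q) ha (hs q) (hv q hq)
      (hg q hq)
  have h2 : normN (∑ q ∈ J, (g q - v q 0)) ≤ ∑ q ∈ J, s q :=
    (normN_sum_le _ _).trans (Finset.sum_le_sum fun q hq => by simpa using hv q hq 0)
  have h3 : normN (∑ q ∈ J, v q 0) ≤ normN (∑ q ∈ J, g q) + ∑ q ∈ J, s q := by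
    have e' : ∑ q ∈ J, v q 0 = ∑ q ∈ J, g q + -(∑ q ∈ J, (g q - v q 0)) := by
      rw [e]; abel
    rw [e']
    refine (normN_add_le _ _).trans ?_
    rw [normN_neg]; linarith
  have h4 := mul_le_mul_of_nonneg_left h3 ha
  have h5 : innerN ξ (∑ q ∈ J, g q) = innerN ξ (∑ q ∈ J, v q 0) +
      innerN ξ (∑ q ∈ J, (g q - v q 0)) := by rw [← innerN_add, ← e]
  linarith

lemma Omega_uni {m : ℕ} (h : ℝ → ℝ) :
    Omega2M m (fun u _ => h u) = Omega1M m h := by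
  unfold Omega2M Omega1M
  rw [Finset.sum_eq_single m]
  · have : ∀ q : ℝ × ℝ, pd m (m - m) (fun u _ => h u) q.1 q.2 = iteratedDeriv m h q.1 := by
      intro q; simp [pd]
    simp_rw [this]
    have := setIntegral_prod_mul (μ := (volume : Measure ℝ)) (ν := (volume : Measure ℝ))
      (fun u => iteratedDeriv m h u ^ 2) (fun _ => (1:ℝ)) (Set.Icc 0 1) (Set.Icc 0 1)
    rw [← Measure.volume_eq_prod] at this
    simp only [mul_one] at this
    rw [this, intervalIntegral.integral_of_le zero_le_one, integral_Icc_eq_integral_Ioc]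
    simp
  · intro a ha hne
    have hb : m - a ≠ 0 := by simp at ha; omega
    have : ∀ q : ℝ × ℝ, pd a (m - a) (fun u _ => h u) q.1 q.2 = 0 := by
      intro q; simp [pd, iteratedDeriv_const, hb]
    simp [this]
  · intro h; simp at h

def comp {p m : ℕ} (R : AddRepM p m) (q : Fin p × Fin p) : ℝ → ℝ → ℝ :=
  if q.1 = q.2 then (fun u _ => R.main q.1 u) else if q.1 < q.2 then R.inter q.1 q.2 else 0

lemma comp_contDiff {p m : ℕ} (R : AddRepM p m) (q : Fin p × Fin p) :
    ContDiff ℝ (m : ℕ∞) (fun y : ℝ × ℝ => comp R q y.1 y.2) := by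
  unfold comp
  split_ifs
  · exact (R.smooth_main q.1).comp contDiff_fst
  · exact R.smooth_inter q.1 q.2
  · exact contDiff_const

lemma sum_pair {p : ℕ} (A : Fin p → ℝ) (B : Fin p → Fin p → ℝ) :
    ∑ q : Fin p × Fin p, (if q.1 = q.2 then A q.1 else if q.1 < q.2 then B q.1 q.2 else 0) =
      (∑ j, A j) + ∑ j, ∑ k, if j < k then B j k else 0 := by
  rw [Fintype.sum_prod_type, ← Finset.sum_add_distrib]
  refine Finset.sum_congr rfl fun j _ => ?_
  have : ∀ k, (if j = k then A j else if j < k then B j k else 0) =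
      (if j = k then A j else 0) + if j < k then B j k else 0 := by
    intro k
    by_cases h : j = k
    · subst h; simp
    · simp [h]
  simp only [this, Finset.sum_add_distrib]
  simp

lemma Omega2M_zero (m : ℕ) : Omega2M m 0 = 0 := by
  have : (0 : ℝ → ℝ → ℝ) = fun u _ => (fun _ => (0:ℝ)) u := rfl
  rw [this, Omega_uni]
  unfold Omega1M
  have : ∀ u, iteratedDeriv m (fun _ : ℝ => (0:ℝ)) u = 0 := by
    intro u; simp
  simp [this]

lemma toFun_eq {p m : ℕ} (R : AddRepM p m) (x : Fin p → ℝ) :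
    R.toFun x = ∑ q : Fin p × Fin p, comp R q (x q.1) (x q.2) := by
  rw [AddRepM.toFun, ← sum_pair (fun j => R.main j (x j)) (fun j k => R.inter j k (x j) (x k))]
  refine Finset.sum_congr rfl fun q _ => ?_
  unfold comp
  split_ifs <;> rfl

lemma tilde_eq {p m : ℕ} (R : AddRepM p m) :
    OmegaTildeGrM R = ∑ q : Fin p × Fin p, √(Omega2M m (comp R q)) := by
  rw [OmegaTildeGrM, ← sum_pair (fun j => √(Omega1M m (R.main j)))
    (fun j k => √(Omega2M m (R.inter j k)))]
  refine Finset.sum_congr rfl fun q _ => ?_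
  unfold comp
  split_ifs
  · rw [Omega_uni]
  · rfl
  · rw [Omega2M_zero, Real.sqrt_zero]

lemma comp_supp {p m : ℕ} (R : AddRepM p m) (J : Finset (Fin p × Fin p)) (hJ : SuppIn R J)
    (q : Fin p × Fin p) (hq : q ∉ J) : comp R q = 0 := by
  unfold comp
  split_ifs with h1 h2
  · have : R.main q.1 = 0 := by
      by_contra h
      have := hJ.1 q.1 h
      apply hq
      convert this
      exact h1.symm
    rw [this]; rfl
  · by_contra h
    exact hq (hJ.2 _ _ h).2
  · rfl

lemma finrank_iSup_le {n : ℕ} {ι : Type*} (s : Finset ι)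
    (V : ι → Submodule ℝ (Fin n → ℝ)) (d : ℕ) (hd : ∀ c, Module.finrank ℝ (V c) ≤ d) :
    Module.finrank ℝ (s.sup V : Submodule ℝ (Fin n → ℝ)) ≤ s.card * d := by
  classical
  induction s using Finset.induction_on with
  | empty => simp
  | insert a s ha ih =>
    rw [Finset.sup_insert, Finset.card_insert_of_notMem ha]
    refine (Submodule.finrank_add_le_finrank_add_finrank _ _).trans ?_
    have := hd a
    rw [add_mul, one_mul]
    omega

end Census

namespace Census

lemma union_event {n : ℕ} {T : Type*} [Fintype T] [Nonempty T] (σ : ℝ) (hσ : 0 < σ)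
    (W : T → ℕ → Submodule ℝ (Fin n → ℝ)) (d : ℕ → ℕ)
    (hd : ∀ τ i, Module.finrank ℝ (W τ i) ≤ d i) (e : ℝ) (he : 0 < e) :
    gaussMeasure n σ {ξ | ¬ ∀ τ i, ∀ w ∈ W τ i, ∑ k, (ξ k / σ) * w k ≤
      √(4 * ((Real.log (Fintype.card T) + Real.log (1 / e) + (i + 1) * Real.log 2) + d i)) *
        √(∑ k, w k ^ 2)} ≤ ENNReal.ofReal e := by
  set t : ℕ → ℝ := fun i => Real.log (Fintype.card T) + Real.log (1 / e) + (i + 1) * Real.log 2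
    with ht
  set c : ℝ := (Fintype.card T : ℝ) with hc
  have hc0 : 0 < c := by rw [hc]; exact_mod_cast Fintype.card_pos
  have hexp : ∀ i, Real.exp (-(t i)) = c⁻¹ * (e * (1 / 2) ^ (i + 1)) := by
    intro i
    have h2 : Real.exp (((i:ℝ) + 1) * Real.log 2) = 2 ^ (i + 1) := by
      have : ((i:ℝ) + 1) * Real.log 2 = Real.log (2 ^ (i + 1)) := by
        rw [Real.log_pow]; push_cast; ring
      rw [this, Real.exp_log (by positivity)]
    rw [Real.exp_neg, ht]
    simp only
    rw [Real.exp_add, Real.exp_add, h2, Real.exp_log hc0, Real.exp_log (by positivity)]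
    simp only [one_div, inv_pow, mul_inv, inv_inv]
    ring
  have hsub : {ξ : Fin n → ℝ | ¬ ∀ τ i, ∀ w ∈ W τ i, ∑ k, (ξ k / σ) * w k ≤
      √(4 * (t i + d i)) * √(∑ k, w k ^ 2)} ⊆
      ⋃ τ, ⋃ i, {ξ : Fin n → ℝ | ¬ ∀ w ∈ W τ i, ∑ k, (ξ k / σ) * w k ≤
      √(4 * (t i + d i)) * √(∑ k, w k ^ 2)} := by
    intro ξ hξ
    simp only [Set.mem_iUnion]
    by_contra hcon
    apply hξ
    intro τ i
    by_contra h
    exact hcon ⟨τ, i, h⟩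
  refine (measure_mono hsub).trans ((measure_iUnion_le _).trans ?_)
  have hτ : ∀ τ : T, gaussMeasure n σ (⋃ i, {ξ : Fin n → ℝ | ¬ ∀ w ∈ W τ i,
      ∑ k, (ξ k / σ) * w k ≤ √(4 * (t i + d i)) * √(∑ k, w k ^ 2)}) ≤
      ENNReal.ofReal (c⁻¹ * e) := by
    intro τ
    refine (measure_iUnion_le _).trans ?_
    have hs : HasSum (fun i : ℕ => c⁻¹ * (e * (1 / 2 : ℝ) ^ (i + 1))) (c⁻¹ * e) := by
      have h := (hasSum_geometric_two).mul_left (c⁻¹ * e * (1 / 2))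
      have e1 : (fun i : ℕ => c⁻¹ * (e * (1 / 2 : ℝ) ^ (i + 1))) =
          fun i : ℕ => c⁻¹ * e * (1 / 2) * (1 / 2 : ℝ) ^ i := by
        funext i; rw [pow_succ]; ring
      have e2 : c⁻¹ * e * (1 / 2) * 2 = c⁻¹ * e := by ring
      rw [e2] at h; rw [e1]; exact h
    calc _ ≤ ∑' i : ℕ, ENNReal.ofReal (c⁻¹ * (e * (1 / 2 : ℝ) ^ (i + 1))) := by
          refine ENNReal.tsum_le_tsum fun i => ?_
          rw [← hexp]
          exact gauss_subspace n (d i) σ hσ (W τ i) (hd τ i) (t i)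
      _ = ENNReal.ofReal (c⁻¹ * e) := by
          rw [← ENNReal.ofReal_tsum_of_nonneg (fun i => by positivity) hs.summable, hs.tsum_eq]
  refine (ENNReal.tsum_le_tsum hτ).trans ?_
  rw [tsum_fintype, Finset.sum_const, Finset.card_univ, nsmul_eq_mul,
    ← ENNReal.ofReal_natCast, ← ENNReal.ofReal_mul (by positivity), ← hc]
  apply le_of_eq
  congr 1
  field_simp

lemma inner_of_sum {n : ℕ} (hn : 1 ≤ n) (ξ w : Fin n → ℝ) (X : ℝ) (i : ℕ) (Y : ℝ)
    (hXY : X ≤ 4 ^ i * Y) (hY : 0 ≤ Y)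
    (h : ∑ k, ξ k * w k ≤ √(4 * X) * √(∑ k, w k ^ 2)) :
    innerN ξ w ≤ 2 ^ i * √(4 * Y / n) * normN w := by
  have hn0 : (0:ℝ) < n := by exact_mod_cast hn
  have h1 : √(4 * X) ≤ 2 ^ i * √(4 * Y) := by
    have : (2:ℝ) ^ i * √(4 * Y) = √(4 * (4 ^ i * Y)) := by
      have e : 4 * ((4:ℝ) ^ i * Y) = (2 ^ i) ^ 2 * (4 * Y) := by
        have : ((2:ℝ) ^ i) ^ 2 = 4 ^ i := by
          rw [← pow_mul, mul_comm, pow_mul]; norm_num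
        rw [this]; ring
      rw [e, Real.sqrt_mul (sq_nonneg ((2:ℝ) ^ i)), Real.sqrt_sq (by positivity)]
    rw [this]
    apply Real.sqrt_le_sqrt
    linarith
  have h2 : ∑ k, ξ k * w k ≤ 2 ^ i * √(4 * Y) * √(∑ k, w k ^ 2) := h.trans (by gcongr)
  rw [innerN, normN, normSqN, Real.sqrt_div (by positivity),
    Real.sqrt_mul (show (0:ℝ) ≤ 1 / n by positivity)]
  have h3 : √(1 / (n:ℝ)) = 1 / √n := by rw [Real.sqrt_div zero_le_one, Real.sqrt_one]
  rw [h3]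
  have h4 : 1 / (n:ℝ) = 1 / √n * (1 / √n) := by
    rw [div_mul_div_comm, Real.mul_self_sqrt hn0.le, one_mul]
  calc 1 / (n:ℝ) * ∑ k, ξ k * w k ≤ 1 / (n:ℝ) * (2 ^ i * √(4 * Y) * √(∑ k, w k ^ 2)) := by gcongr
    _ = _ := by rw [h4]; ring

lemma level_exists (m n : ℕ) (hn : 1 ≤ n) :
    ∃ L : ℕ, (4:ℝ) ^ L / n ≤ rnM m n ^ 2 ∧ (2:ℝ) ^ m / 2 ^ (L * m) ≤ 4 ^ m * rnM m n := by
  have hn0 : (0:ℝ) < n := by exact_mod_cast hn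
  have hn1 : (1:ℝ) ≤ n := by exact_mod_cast hn
  set y : ℝ := (n:ℝ) ^ (1 / ((m:ℝ) + 1)) with hy
  have hy0 : 0 < y := Real.rpow_pos_of_pos hn0 _
  have hy1 : 1 ≤ y := Real.one_le_rpow hn1 (by positivity)
  have hyn : y ^ (m + 1) = n := by
    rw [hy, ← Real.rpow_natCast, ← Real.rpow_mul hn0.le]
    push_cast
    rw [one_div_mul_cancel (by positivity), Real.rpow_one]
  have hr0 : 0 < rnM m n := Real.rpow_pos_of_pos hn0 _
  have hr : rnM m n ^ 2 = 1 / y ^ m := by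
    rw [rnM, hy, ← Real.rpow_natCast, ← Real.rpow_natCast, ← Real.rpow_mul hn0.le,
      ← Real.rpow_mul hn0.le, one_div, ← Real.rpow_neg hn0.le]
    congr 1
    push_cast
    field_simp
  obtain ⟨L, h1, h2⟩ := exists_nat_pow_near hy1 (show (1:ℝ) < 4 by norm_num)
  refine ⟨L, ?_, ?_⟩
  · rw [hr, ← hyn, pow_succ]
    rw [div_le_div_iff₀ (by positivity) (by positivity)]
    have : 0 < y ^ m := by positivity
    nlinarith
  · have h3 : 1 / (2:ℝ) ^ ((L + 1) * m) ≤ rnM m n := by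
      refine (sq_le_sq₀ (by positivity) hr0.le).mp ?_
      rw [hr, div_pow, one_pow]
      apply one_div_le_one_div_of_le (by positivity)
      have e : ((2:ℝ) ^ ((L + 1) * m)) ^ 2 = (4 ^ (L + 1)) ^ m := by
        rw [← pow_mul, ← pow_mul, mul_comm _ 2, pow_mul]; norm_num
      rw [e]
      exact pow_le_pow_left₀ hy0.le h2.le m
    have e : (2:ℝ) ^ m / 2 ^ (L * m) = 4 ^ m * (1 / 2 ^ ((L + 1) * m)) := by
      have : (4:ℝ) ^ m = 2 ^ m * 2 ^ m := by rw [← mul_pow]; norm_num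
      rw [this, add_mul, one_mul, pow_add]
      field_simp
    rw [e]
    gcongr

lemma cover {α : Type*} [Nonempty α] [DecidableEq α] (J : Finset α) (M : ℕ) (h : J.card ≤ M) :
    ∃ τ : Fin M → α, ∀ q ∈ J, ∃ c, τ c = q := by
  refine ⟨fun c => if hc : c.1 < J.card then (J.equivFin.symm ⟨c.1, hc⟩).1
    else Classical.arbitrary α, fun q hq => ?_⟩
  refine ⟨⟨(J.equivFin ⟨q, hq⟩).1, lt_of_lt_of_le (J.equivFin ⟨q, hq⟩).2 h⟩, ?_⟩
  simp

lemma main_event (m M : ℕ) (hm : 2 ≤ m) (n p : ℕ) (hn : 1 ≤ n) (hp : 1 ≤ p)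
    (x : Fin n → Fin p → ℝ) (hx : ∀ i j, x i j ∈ Set.Icc (0:ℝ) 1) (σ : ℝ) (hσ : 0 < σ)
    (e : ℝ) (he : 0 < e) (he1 : e < 1) (L : ℕ) :
    gaussMeasure n σ {ξ | ¬ ∀ R : AddRepM p m,
      (∃ J : Finset (Fin p × Fin p), J.card ≤ M ∧ SuppIn R J) →
      innerN (fun i => ξ i / σ) (evalVecM x R) ≤
        √(4 * (2 * M * Real.log p + Real.log (1 / e) + Real.log 2 + 25 * M * m ^ 2 * 4 ^ L) / n) *
          (normN (evalVecM x R) + 5 * (2 ^ m / 2 ^ (L * m)) * OmegaTildeGrM R)} ≤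
      ENNReal.ofReal e := by
  classical
  have : NeZero p := ⟨by omega⟩
  have hV := fun (q : Fin p × Fin p) (l : ℕ) => appr_main hn hm l
    (fun i => (x i q.1, x i q.2)) (fun i => ⟨hx i q.1, hx i q.2⟩)
  choose V hVd hVa using hV
  set W : (Fin M → Fin p × Fin p) → ℕ → Submodule ℝ (Fin n → ℝ) := fun τ i =>
    Finset.univ.sup fun c => V (τ c) (L + i) ⊔ V (τ c) (L + (i + 1)) with hW
  have hWd : ∀ τ i, Module.finrank ℝ (W τ i) ≤ 25 * M * m ^ 2 * 4 ^ (L + i) := by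
    intro τ i
    refine (finrank_iSup_le _ _ (25 * m ^ 2 * 4 ^ (L + i)) fun c => ?_).trans ?_
    · refine (Submodule.finrank_add_le_finrank_add_finrank _ _).trans
        ((add_le_add (hVd _ _) (hVd _ _)).trans (le_of_eq ?_))
      rw [← add_assoc, pow_succ]; ring
    · simp only [Finset.card_univ, Fintype.card_fin]
      apply le_of_eq; ring
  refine (measure_mono ?_).trans (union_event σ hσ W (fun i => 25 * M * m ^ 2 * 4 ^ (L + i))
    hWd e he)
  intro ξ hξ hgood
  apply hξ
  rintro R ⟨J, hJM, hJ⟩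
  set Y : ℝ := 2 * M * Real.log p + Real.log (1 / e) + Real.log 2 + 25 * M * m ^ 2 * 4 ^ L with hY
  have hlp : 0 ≤ Real.log p := Real.log_natCast_nonneg p
  have hle : 0 ≤ Real.log (1 / e) := Real.log_nonneg (by rw [le_div_iff₀ he]; linarith)
  have hl2 : 0 ≤ Real.log 2 := Real.log_nonneg (by norm_num)
  have hY0 : 0 ≤ Y := by positivity
  set a := √(4 * Y / n) with ha
  have key : ∀ τ i, ∀ w ∈ W τ i, innerN (fun k => ξ k / σ) w ≤ 2 ^ i * a * normN w := by
    intro τ i w hw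
    refine inner_of_sum hn _ w _ i Y ?_ hY0 (hgood τ i w hw)
    have hcard : Real.log (Fintype.card (Fin M → Fin p × Fin p)) = 2 * M * Real.log p := by
      simp only [Fintype.card_fun, Fintype.card_prod, Fintype.card_fin]
      push_cast
      rw [Real.log_pow, ← pow_two, Real.log_pow]; push_cast; ring
    rw [hcard, hY]
    push_cast
    rw [pow_add]
    have h4 : (1:ℝ) ≤ 4 ^ i := one_le_pow₀ (by norm_num)
    have hi : (i:ℝ) + 1 ≤ 4 ^ i := by
      have : i + 1 ≤ 4 ^ i := Nat.lt_pow_self (by norm_num)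
      exact_mod_cast this
    have k1 : 2 * M * Real.log p ≤ 4 ^ i * (2 * M * Real.log p) :=
      le_mul_of_one_le_left (by positivity) h4
    have k2 : Real.log (1 / e) ≤ 4 ^ i * Real.log (1 / e) := le_mul_of_one_le_left hle h4
    have k3 : ((i:ℝ) + 1) * Real.log 2 ≤ 4 ^ i * Real.log 2 := by gcongr
    linarith
  obtain ⟨τ, hτ⟩ := cover J M hJM
  have hsm := fun q i => hVa q (L + i) (comp R q) (comp_contDiff R q)
  choose v hvV hvn using hsm
  have hVW : ∀ q ∈ J, ∀ i, V q (L + i) ≤ W τ i ∧ V q (L + (i + 1)) ≤ W τ i := by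
    intro q hq i
    obtain ⟨c, hc⟩ := hτ q hq
    have : V (τ c) (L + i) ⊔ V (τ c) (L + (i + 1)) ≤ W τ i :=
      Finset.le_sup (f := fun c => V (τ c) (L + i) ⊔ V (τ c) (L + (i + 1))) (Finset.mem_univ c)
    rw [hc] at this
    exact ⟨le_sup_left.trans this, le_sup_right.trans this⟩
  set g : Fin p × Fin p → Fin n → ℝ := fun q i => comp R q (x i q.1) (x i q.2) with hg
  set B : ℝ := 2 ^ m / 2 ^ (L * m) with hB
  have hB0 : 0 ≤ B := by positivity
  have heval : evalVecM x R = ∑ q ∈ J, g q := by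
    ext i
    rw [evalVecM, toFun_eq, Finset.sum_apply]
    symm
    apply Finset.sum_subset (Finset.subset_univ J)
    intro q _ hq
    rw [hg]; simp only
    rw [comp_supp R J hJ q hq]; rfl
  have hdet := det_bound J (fun k => ξ k / σ) g v (fun q => B * √(Omega2M m (comp R q))) a
    (Real.sqrt_nonneg _) (fun q => by positivity) (fun q _ i => by
      refine (hvn q i).trans ?_
      have : (2:ℝ) ^ m / 2 ^ ((L + i) * m) ≤ B * (1 / 4) ^ i := by
        rw [hB, add_mul, pow_add, ← div_div, div_eq_mul_one_div _ ((2:ℝ) ^ (i * m))]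
        gcongr
        rw [div_pow, one_pow]
        apply one_div_le_one_div_of_le (by positivity)
        have e4 : (4:ℝ) ^ i = 2 ^ (i * 2) := by rw [mul_comm, pow_mul]; norm_num
        rw [e4]
        exact pow_le_pow_right₀ (by norm_num) (Nat.mul_le_mul_left i hm)
      calc _ ≤ B * (1 / 4) ^ i * √(Omega2M m (comp R q)) := by gcongr
        _ = _ := by ring)
    (fun q hq i => key τ i _ ((W τ i).sub_mem ((hVW q hq i).2 (hvV q (i + 1)))
      ((hVW q hq i).1 (hvV q i))))
    (by
      have := key τ 0 (∑ q ∈ J, v q 0) ((W τ 0).sum_mem fun q hq => (hVW q hq 0).1 (hvV q 0))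
      simpa using this)
  rw [heval]
  refine hdet.trans ?_
  have hsum : ∑ q ∈ J, B * √(Omega2M m (comp R q)) ≤ B * OmegaTildeGrM R := by
    rw [← Finset.mul_sum, tilde_eq]
    gcongr
    exact Finset.subset_univ J
  have ha0 : 0 ≤ a := Real.sqrt_nonneg _
  have := mul_le_mul_of_nonneg_left hsum ha0
  linarith

lemma rate_bound (M m n p : ℕ) (hn : 1 ≤ n) (hp : 1 ≤ p) (e : ℝ) (he : 0 < e) (he1 : e < 1)
    (L : ℕ) (hL : (4:ℝ) ^ L / n ≤ rnM m n ^ 2) :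
    √(4 * (2 * M * Real.log p + Real.log (1 / e) + Real.log 2 + 25 * M * m ^ 2 * 4 ^ L) / n) ≤
      2 * (√(2 * M) + 1 + √(25 * M * m ^ 2 + 1)) *
        (rnM m n + √(logep p / n) + √(Real.log (1 / e) / n)) := by
  have hn0 : (0:ℝ) < n := by exact_mod_cast hn
  have hp0 : (0:ℝ) < p := by exact_mod_cast hp
  have hr0 : 0 < rnM m n := Real.rpow_pos_of_pos hn0 _
  have hlp : 0 ≤ Real.log p := Real.log_natCast_nonneg p
  have hle : 0 ≤ Real.log (1 / e) := Real.log_nonneg (by rw [le_div_iff₀ he]; linarith)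
  have hlep : logep p = 1 + Real.log p := by
    rw [logep, Real.log_mul (Real.exp_ne_zero _) hp0.ne', Real.log_exp]
  have hlep0 : 0 ≤ logep p := by rw [hlep]; linarith
  set α := √(2 * (M:ℝ)) with hα
  set β := √(25 * (M:ℝ) * m ^ 2 + 1) with hβ
  set A := √(logep p / n) with hA
  set E := √(Real.log (1 / e) / n) with hE
  set r := rnM m n with hr
  have hα0 : 0 ≤ α := Real.sqrt_nonneg _
  have hβ0 : 0 ≤ β := Real.sqrt_nonneg _
  have hA0 : 0 ≤ A := Real.sqrt_nonneg _
  have hE0 : 0 ≤ E := Real.sqrt_nonneg _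
  have sα : α ^ 2 = 2 * M := Real.sq_sqrt (by positivity)
  have sβ : β ^ 2 = 25 * M * m ^ 2 + 1 := Real.sq_sqrt (by positivity)
  have sA : A ^ 2 = logep p / n := Real.sq_sqrt (by positivity)
  have sE : E ^ 2 = Real.log (1 / e) / n := Real.sq_sqrt (by positivity)
  have h1 : √(4 * (2 * M * Real.log p + Real.log (1 / e) + Real.log 2
      + 25 * M * m ^ 2 * 4 ^ L) / n) ≤ 2 * (α * A + E + β * r) := by
    rw [Real.sqrt_le_left (by positivity)]
    have h2 : Real.log 2 ≤ 4 ^ L := by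
      have : Real.log 2 ≤ 1 := by linarith [Real.log_two_lt_d9]
      exact this.trans (one_le_pow₀ (by norm_num))
    have h3 : 4 * (2 * M * Real.log p + Real.log (1 / e) + Real.log 2
      + 25 * M * m ^ 2 * 4 ^ L) / n ≤ 4 * (2 * M * logep p + Real.log (1 / e)
        + (25 * M * m ^ 2 + 1) * 4 ^ L) / n := by
      refine div_le_div_of_nonneg_right (mul_le_mul_of_nonneg_left ?_ (by norm_num)) hn0.le
      have : 2 * (M:ℝ) * Real.log p ≤ 2 * M * logep p := by
        gcongr; rw [hlep]; linarith
      linarith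
    refine h3.trans ?_
    have h4 : 4 * (2 * M * logep p + Real.log (1 / e)
        + (25 * M * m ^ 2 + 1) * 4 ^ L) / n =
        4 * (α ^ 2 * A ^ 2 + E ^ 2 + β ^ 2 * (4 ^ L / n)) := by
      rw [sα, sA, sE, sβ]; field_simp
    rw [h4]
    have h5 : β ^ 2 * (4 ^ L / n) ≤ β ^ 2 * r ^ 2 := by gcongr
    have h6 : 0 ≤ α * A * E := by positivity
    have h7 : 0 ≤ α * A * (β * r) := by positivity
    have h8 : 0 ≤ E * (β * r) := by positivity
    nlinarith
  refine h1.trans ?_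
  have k1 : 0 ≤ α * r := by positivity
  have k2 : 0 ≤ α * E := by positivity
  have k3 : 0 ≤ β * A := by positivity
  have k4 : 0 ≤ β * E := by positivity
  nlinarith

end Census

open Census in
/-- Lemma 3, uniform maximal inequality over `F_M`.  There is `C > 0`
depending only on `m` and `K` such that for every `ε' ∈ (0,1)`, with probability at
least `1 - ε'` over the i.i.d. `N(0,σ²)` noise, simultaneously for all `f ∈ F_M`
(the union of the `F(J)` over `|J| ≤ M = K(K+1)/2`):
`(ε/σ, f)ₙ ≤ C[(rₙ + √(log(ep)/n) + √(log(1/ε')/n))‖f‖ₙ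
  + (rₙ² + rₙ√(log(ep)/n) + rₙ√(log(1/ε')/n))Ω̃_gr(f)]`. -/
theorem statement7 (m K : ℕ) (hm : 2 ≤ m) (hK : 1 ≤ K) :
    ∃ C : ℝ, 0 < C ∧
      ∀ (n p : ℕ), 1 ≤ n → 1 ≤ p →
      ∀ (x : Fin n → Fin p → ℝ), (∀ i j, x i j ∈ Set.Icc (0:ℝ) 1) →
      ∀ (σ : ℝ), 0 < σ →
      ∀ (ε' : ℝ), 0 < ε' → ε' < 1 →
        ENNReal.ofReal (1 - ε') ≤
          gaussMeasure n σ
            {ε : Fin n → ℝ |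
              ∀ R : AddRepM p m,
                (∃ J : Finset (Fin p × Fin p), (∀ q ∈ J, q.1 ≤ q.2) ∧
                  J.card ≤ K * (K + 1) / 2 ∧ SuppIn R J) →
                innerN (fun i => ε i / σ) (evalVecM x R) ≤
                  C * ((rnM m n + Real.sqrt (logep p / n)
                        + Real.sqrt (Real.log (1 / ε') / n)) * normN (evalVecM x R)
                    + (rnM m n ^ 2 + rnM m n * Real.sqrt (logep p / n)
                        + rnM m n * Real.sqrt (Real.log (1 / ε') / n))
                      * OmegaTildeGrM R)} := by
  set M : ℕ := K * (K + 1) / 2 with hM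
  set c₁ : ℝ := 2 * (√(2 * M) + 1 + √(25 * M * m ^ 2 + 1)) with hc₁
  have hc₁0 : 0 < c₁ := by positivity
  refine ⟨c₁ * (1 + 5 * 4 ^ m), by positivity, ?_⟩
  intro n p hn hp x hx σ hσ e he he1
  obtain ⟨L, hL1, hL2⟩ := level_exists m n hn
  have hbad := main_event m M hm n p hn hp x hx σ hσ e he he1 L
  have hrate := rate_bound M m n p hn hp e he he1 L hL1
  have : IsProbabilityMeasure (gaussMeasure n σ) := by
    rw [gaussMeasure_eq]; infer_instance
  set G : Set (Fin n → ℝ) := {ξ | ∀ R : AddRepM p m,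
      (∃ J : Finset (Fin p × Fin p), J.card ≤ M ∧ SuppIn R J) →
      innerN (fun i => ξ i / σ) (evalVecM x R) ≤
        √(4 * (2 * M * Real.log p + Real.log (1 / e) + Real.log 2 + 25 * M * m ^ 2 * 4 ^ L) / n) *
          (normN (evalVecM x R) + 5 * (2 ^ m / 2 ^ (L * m)) * OmegaTildeGrM R)} with hG
  have hGc : gaussMeasure n σ Gᶜ ≤ ENNReal.ofReal e := hbad
  have hGm : ENNReal.ofReal (1 - e) ≤ gaussMeasure n σ G := by
    have h1 : (1 : ENNReal) ≤ gaussMeasure n σ G + gaussMeasure n σ Gᶜ := by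
      rw [← measure_univ (μ := gaussMeasure n σ), ← Set.union_compl_self G]
      exact measure_union_le _ _
    rw [ENNReal.ofReal_sub _ he.le, ENNReal.ofReal_one]
    exact tsub_le_iff_right.mpr (h1.trans (by gcongr))
  refine hGm.trans (measure_mono ?_)
  rintro ξ hξ R ⟨J, -, hJM, hJ⟩
  refine (hξ R ⟨J, hJM, hJ⟩).trans ?_
  have hn0 : (0:ℝ) < n := by exact_mod_cast hn
  have hr0 : 0 < rnM m n := Real.rpow_pos_of_pos hn0 _
  have hN := normN_nonneg (evalVecM x R)
  have hO : 0 ≤ OmegaTildeGrM R := by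
    rw [tilde_eq]; exact Finset.sum_nonneg fun q _ => Real.sqrt_nonneg _
  set r := rnM m n
  set S := r + √(logep p / n) + √(Real.log (1 / e) / n) with hS
  have hS0 : 0 ≤ S := by positivity
  have h1 : (normN (evalVecM x R) + 5 * (2 ^ m / 2 ^ (L * m)) * OmegaTildeGrM R) ≤
      (1 + 5 * 4 ^ m) * (normN (evalVecM x R) + r * OmegaTildeGrM R) := by
    have h2 : 5 * ((2:ℝ) ^ m / 2 ^ (L * m)) * OmegaTildeGrM R ≤
        5 * (4 ^ m * r) * OmegaTildeGrM R := by gcongr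
    have h3 : 0 ≤ r * OmegaTildeGrM R := by positivity
    have h4 : 0 ≤ 5 * (4:ℝ) ^ m * normN (evalVecM x R) := by positivity
    nlinarith
  calc _ ≤ c₁ * S * ((1 + 5 * 4 ^ m) * (normN (evalVecM x R) + r * OmegaTildeGrM R)) := by
        gcongr
    _ = _ := by rw [hS]; ring
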